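/- arXiv:1310.5938 — 4 statements merged into one kernel-verified Lean document; each statement's English description precedes it below -/
import Mathlib

section
/- For every integer n ≥ 1, the double series defining the subelliptic heat kernel p_t(r,η) converges absolutely for every t > 0, r ∈ [0, π/2), η ∈ (0, π), and the resulting function satisfies the subelliptic heat equation ∂p/∂t = ∂²p/∂r² + ((4n−1)·cot r − 3·tan r)·∂p/∂r + tan²r·(∂²p/∂η² + 2·cot η·∂p/∂η) at every point (t, r, η) ∈ (0,∞) × (0, π/2) × (0, π). -/
open Real MeasureTheory Filter Topology Set

noncomputable section

/-- The defining formula of the Jacobi polynomial `P_k^{(α,β)}` on `(-1,1)`. -/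
def jacobiFormula (k α β : ℕ) (x : ℝ) : ℝ :=
  ((-1 : ℝ) ^ k / (2 ^ k * Nat.factorial k)) * (1 - x) ^ (-(α : ℤ)) * (1 + x) ^ (-(β : ℤ)) *
    iteratedDeriv k (fun y => (1 - y) ^ (α + k) * (1 + y) ^ (β + k)) x

/-- `J k α β` is the Jacobi polynomial `P_k^{(α,β)}`: a polynomial function satisfying the
defining formula on `(-1,1)`. -/
def IsJacobi (J : ℕ → ℕ → ℕ → ℝ → ℝ) : Prop :=
  ∀ k α β : ℕ, (∃ p : Polynomial ℝ, ∀ x : ℝ, J k α β x = p.eval x) ∧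
    ∀ x ∈ Set.Ioo (-1 : ℝ) 1, J k α β x = jacobiFormula k α β x

/-- The vertical factor `sin((m+1)η)/sin η`, extended by its limit `m+1` at `η = 0`. -/
def vertFactor (m : ℕ) (η : ℝ) : ℝ :=
  if η = 0 then (m + 1 : ℝ) else Real.sin ((m + 1) * η) / Real.sin η

/-- The general term of the double series defining the subelliptic heat kernel of the
quaternionic Hopf fibration on `S^{4n+3}`. -/
def pTerm (n : ℕ) (J : ℕ → ℕ → ℕ → ℝ → ℝ) (t r η : ℝ) (mk : ℕ × ℕ) : ℝ :=
  (Real.Gamma (2 * n) / (2 * Real.pi ^ (2 * n + 2))) *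
    (2 * (mk.2 : ℝ) + mk.1 + 2 * n + 1) * ((mk.1 : ℝ) + 1) *
    (Nat.choose (mk.2 + mk.1 + 2 * n) (2 * n - 1) : ℝ) *
    Real.exp (-(4 * ((mk.2 : ℝ) * (mk.2 + 2 * n + mk.1 + 1) + n * mk.1)) * t) *
    vertFactor mk.1 η * Real.cos r ^ mk.1 * J mk.2 (2 * n - 1) (mk.1 + 1) (Real.cos (2 * r))

/-- The subelliptic heat kernel of the quaternionic Hopf fibration on `S^{4n+3}`. -/
def pKernel (n : ℕ) (J : ℕ → ℕ → ℕ → ℝ → ℝ) (t r η : ℝ) : ℝ :=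
  ∑' mk : ℕ × ℕ, pTerm n J t r η mk

/-- The defining formula of the Gegenbauer polynomial `C_m^{2n+1}` on `(-1,1)`. -/
def gegenbauerFormula (n m : ℕ) (x : ℝ) : ℝ :=
  ((-1 : ℝ) ^ m / 2 ^ m) *
    (Real.Gamma ((m : ℝ) + 4 * n + 2) * Real.Gamma (2 * (n : ℝ) + 3 / 2) /
      (Real.Gamma (4 * (n : ℝ) + 2) * Real.Gamma ((m : ℝ) + 1) *
        Real.Gamma (2 * (n : ℝ) + m + 3 / 2))) *
    (1 - x ^ 2) ^ (-(2 * (n : ℝ) + 1 / 2)) *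
    iteratedDeriv m (fun y => (1 - y ^ 2) ^ (2 * (n : ℝ) + m + 1 / 2)) x

/-- `C m` is the Gegenbauer polynomial `C_m^{2n+1}`. -/
def IsGegenbauer (n : ℕ) (C : ℕ → ℝ → ℝ) : Prop :=
  ∀ m : ℕ, (∃ p : Polynomial ℝ, ∀ x : ℝ, C m x = p.eval x) ∧
    ∀ x ∈ Set.Ioo (-1 : ℝ) 1, C m x = gegenbauerFormula n m x

/-- The Riemannian heat kernel of `S^{4n+3}`. -/
def qKernel (n : ℕ) (C : ℕ → ℝ → ℝ) (t x : ℝ) : ℝ :=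
  (Real.Gamma (2 * n + 1) / (2 * Real.pi ^ (2 * n + 2))) *
    ∑' m : ℕ, ((m : ℝ) + 2 * n + 1) * Real.exp (-((m : ℝ) * (m + 4 * n + 2)) * t) * C m x

/-- The general term of the double series defining the subelliptic heat kernel on `CP^{2n+1}`. -/
def hTerm (n : ℕ) (J : ℕ → ℕ → ℕ → ℝ → ℝ) (t r φ : ℝ) (mk : ℕ × ℕ) : ℝ :=
  (Real.Gamma (2 * n) / (4 * Real.pi ^ (2 * n + 2))) *
    (2 * (mk.2 : ℝ) + 2 * mk.1 + 2 * n + 1) * (2 * (mk.1 : ℝ) + 1) *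
    (Nat.choose (mk.2 + 2 * mk.1 + 2 * n) (2 * n - 1) : ℝ) *
    Real.exp (-(4 * (mk.2 : ℝ) * (mk.2 + 2 * n + 2 * mk.1 + 1) + 8 * n * mk.1) * t) *
    Real.cos r ^ (2 * mk.1) * J mk.1 0 0 (Real.cos (2 * φ)) *
    J mk.2 (2 * n - 1) (2 * mk.1 + 1) (Real.cos (2 * r))

/-- The subelliptic heat kernel of the fibration `CP^1 → CP^{2n+1} → HP^n`. -/
def hKernel (n : ℕ) (J : ℕ → ℕ → ℕ → ℝ → ℝ) (t r φ : ℝ) : ℝ :=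
  ∑' mk : ℕ × ℕ, hTerm n J t r φ mk

end

/-!
Each term of the series is a mode `α e^{-λt} U_m(cos η) · cos^m r P_k(cos 2r)`. The Chebyshev
equation gives the fibre operator `∂²_η + 2 cot η ∂_η` the eigenvalue `-m(m+2)`, and conjugating the
Jacobi equation by `cos^m r` turns the radial operator into multiplication by `m(m+2) tan² r - λ`;
the two `tan²` contributions cancel, so every mode solves the heat equation.

It remains to differentiate the series termwise. With `N = 2k + m + 2n`, expanding the Jacobi
polynomial in monomials `sin^a r cos^b r` of degree at most `N` and summing coefficients by
Vandermonde bounds the derivatives of the mode by a fixed power of `N` times `N^k`. The factor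
`N^k = e^{k log N}` is beaten by `e^{-λt}`, since `λ ≥ 2kN + 4m`.
-/

noncomputable section

open Finset.HasAntidiagonal (antidiagonal mem_antidiagonal)

section JacobiPolynomials

open Polynomial

section CommRing

variable {R : Type*} [CommRing R]

/-- The Jacobi weight `(x - 1) ^ a * (x + 1) ^ b` as a polynomial; the sign relative to the usual
`(1 - x) ^ a * (1 + x) ^ b` matches the library's lemmas on derivatives of `(X - c) ^ n`. -/
def jacobiWeight (R : Type*) [CommRing R] (a b : ℕ) : R[X] := (X - 1) ^ a * (X + 1) ^ b

lemma jacobiWeight_ne_zero [IsDomain R] (a b : ℕ) : jacobiWeight R a b ≠ 0 :=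
  mul_ne_zero (pow_ne_zero _ (X_sub_C_ne_zero 1)) (pow_ne_zero _ (X_add_C_ne_zero 1))

lemma X_sq_sub_one_mul_derivative_jacobiWeight (a b : ℕ) :
    (X ^ 2 - 1) * derivative (jacobiWeight R a b) =
      ((a + b : R[X]) * X + (a - b : R[X])) * jacobiWeight R a b := by
  rcases a with _ | a <;> rcases b with _ | b <;>
    simp [jacobiWeight, derivative_mul, derivative_pow] <;> ring

lemma X_sq_sub_one_mul_iterate_derivative_jacobiWeight (a b j : ℕ) :
    (X ^ 2 - 1) * derivative^[j + 2] (jacobiWeight R a b) =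
      ((a + b - 2 * (j + 1) : R[X]) * X + (a - b : R[X])) *
          derivative^[j + 1] (jacobiWeight R a b) +
        ((j + 1) * (a + b - j) : R[X]) * derivative^[j] (jacobiWeight R a b) := by
  induction j with
  | zero =>
    have h := congrArg derivative (X_sq_sub_one_mul_derivative_jacobiWeight (R := R) a b)
    simp only [derivative_mul, derivative_sub, derivative_X_pow_succ, Nat.cast_one, map_add,
      map_one, pow_one, derivative_one, sub_zero, derivative_natCast, add_zero, zero_mul,
      derivative_X, mul_one, zero_add, sub_self] at h
    simp only [zero_add, Function.iterate_succ, Function.comp_apply,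
      Nat.cast_zero, mul_one, sub_zero, one_mul, Function.iterate_zero, id_eq]
    linear_combination h
  | succ j ih =>
    have h := congrArg derivative ih
    simp only [derivative_mul, derivative_sub, derivative_X_pow_succ, Nat.cast_one, map_add,
      map_one, pow_one, derivative_one, sub_zero, ← Function.iterate_succ_apply',
      Nat.succ_eq_add_one, derivative_natCast, add_zero, derivative_ofNat,
      zero_mul, mul_zero, sub_self, derivative_X, mul_one, zero_add] at h
    push_cast
    linear_combination h

end CommRing

variable {K : Type*} [Field K]

/-- The Jacobi polynomial `P_k^{(α,β)}`, given by its expansion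
`2⁻ᵏ ∑ (k+α choose i) (k+β choose j) (x-1)^j (x+1)^i` over `i + j = k`. -/
def jacobiPoly (K : Type*) [Field K] (k α β : ℕ) : K[X] :=
  C ((2 ^ k)⁻¹) * ∑ ij ∈ antidiagonal k,
    (((α + k).choose ij.1 : K[X]) * ((β + k).choose ij.2 : K[X])) * jacobiWeight K ij.2 ij.1

lemma iterate_derivative_jacobiWeight [CharZero K] (k α β : ℕ) :
    derivative^[k] (jacobiWeight K (α + k) (β + k)) =
      C (2 ^ k * k.factorial : K) * (jacobiWeight K α β * jacobiPoly K k α β) := by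
  have term_eq : ∀ ij ∈ antidiagonal k,
      k.choose ij.2 • (derivative^[ij.1] ((X - 1 : K[X]) ^ (α + k)) *
        derivative^[ij.2] ((X + 1 : K[X]) ^ (β + k))) =
      k.factorial * (jacobiWeight K α β *
        ((α + k).choose ij.1 * (β + k).choose ij.2 * jacobiWeight K ij.2 ij.1)) := by
    rintro ⟨i, j⟩ hij
    obtain rfl : i + j = k := mem_antidiagonal.mp hij
    have choose_factorial : ((i + j).choose j * i.factorial * j.factorial : K[X]) =
        (i + j).factorial := by
      exact_mod_cast Nat.add_choose_mul_factorial_mul_factorial i j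
    rw [← C_1, iterate_derivative_X_sub_pow, iterate_derivative_X_add_pow,
      Nat.descFactorial_eq_factorial_mul_choose, Nat.descFactorial_eq_factorial_mul_choose,
      show α + (i + j) - i = α + j by omega, show β + (i + j) - j = β + i by omega,
      ← choose_factorial]
    simp only [jacobiWeight, nsmul_eq_mul, C_1]
    push_cast
    ring
  have two_pow_cancel : C (2 ^ k * k.factorial : K) * C ((2 ^ k)⁻¹) = (k.factorial : K[X]) := by
    rw [← C_mul, mul_right_comm, mul_inv_cancel₀ (by simp), one_mul, C_eq_natCast]
  calc derivative^[k] (jacobiWeight K (α + k) (β + k))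
      = ∑ ij ∈ antidiagonal k, k.choose ij.2 •
          (derivative^[ij.1] ((X - 1 : K[X]) ^ (α + k)) *
            derivative^[ij.2] ((X + 1 : K[X]) ^ (β + k))) := by
        rw [jacobiWeight, iterate_derivative_mul, ← Finset.Nat.sum_antidiagonal_swap,
          Finset.Nat.sum_antidiagonal_eq_sum_range_succ_mk]
        rfl
    _ = k.factorial * (jacobiWeight K α β * ∑ ij ∈ antidiagonal k,
          (((α + k).choose ij.1 : K[X]) * ((β + k).choose ij.2 : K[X])) *
            jacobiWeight K ij.2 ij.1) := by
        rw [Finset.sum_congr rfl term_eq, Finset.mul_sum, Finset.mul_sum]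
    _ = C (2 ^ k * k.factorial : K) * (jacobiWeight K α β * jacobiPoly K k α β) := by
        rw [← two_pow_cancel, jacobiPoly]
        ring

lemma jacobiPoly_ode [CharZero K] (k α β : ℕ) :
    (X ^ 2 - 1) * derivative (derivative (jacobiPoly K k α β)) +
        ((α + β + 2 : K[X]) * X + (α - β : K[X])) * derivative (jacobiPoly K k α β) =
      (k * (k + α + β + 1) : K[X]) * jacobiPoly K k α β := by
  set w := jacobiWeight K α β
  set y := jacobiPoly K k α β
  set c : K := 2 ^ k * k.factorial
  have hc : C c ≠ 0 := C_ne_zero.mpr (mul_ne_zero (by simp) (by simp [Nat.factorial_ne_zero]))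
  have rodrigues : derivative^[k] (jacobiWeight K (α + k) (β + k)) = C c * (w * y) :=
    iterate_derivative_jacobiWeight k α β
  have pearson := X_sq_sub_one_mul_derivative_jacobiWeight (R := K) α β
  have pearson' := congrArg derivative pearson
  have ode := X_sq_sub_one_mul_iterate_derivative_jacobiWeight (R := K) (α + k) (β + k) k
  simp only [Function.iterate_succ_apply', rodrigues] at ode
  have hX : (X ^ 2 - 1 : K[X]) ≠ 0 := by simpa using! X_pow_sub_C_ne_zero (R := K) two_pos 1
  refine mul_left_cancel₀ (mul_ne_zero (mul_ne_zero hc hX) (jacobiWeight_ne_zero α β)) ?_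
  simp only [derivative_mul, derivative_C, zero_mul, zero_add, Nat.cast_add,
    add_sub_add_right_eq_sub, derivative_sub, derivative_X_pow_succ, Nat.cast_one, map_add,
    map_one, pow_one, derivative_one, sub_zero, derivative_natCast, add_zero, derivative_X,
    mul_one, sub_self] at ode pearson pearson'
  linear_combination (X ^ 2 - 1) * ode - C c * (X ^ 2 - 1) * y * pearson' -
    2 * C c * (X ^ 2 - 1) * derivative y * pearson

lemma iteratedDeriv_polynomial_eval {𝕜 : Type*} [NontriviallyNormedField 𝕜] (p : 𝕜[X]) (k : ℕ) :
    iteratedDeriv k (fun x => p.eval x) = fun x => (derivative^[k] p).eval x := by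
  induction k generalizing p with
  | zero => rfl
  | succ k ih =>
    rw [iteratedDeriv_succ', Function.iterate_succ_apply, ← ih]
    exact congrArg (iteratedDeriv k) (funext fun x => p.deriv)

lemma jacobiFormula_eq_eval_jacobiPoly (k α β : ℕ) {x : ℝ} (hx : x ∈ Set.Ioo (-1 : ℝ) 1) :
    jacobiFormula k α β x = (jacobiPoly ℝ k α β).eval x := by
  have weight_eq : (fun y : ℝ => (1 - y) ^ (α + k) * (1 + y) ^ (β + k)) =
      fun y => (-1) ^ (α + k) * (jacobiWeight ℝ (α + k) (β + k)).eval y := by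
    funext y
    simp only [jacobiWeight, eval_mul, eval_pow, eval_sub, eval_add, eval_X, eval_one]
    rw [← mul_assoc, ← mul_pow]
    ring
  have one_sub_pow : (1 - x) ^ α = (-1) ^ α * (x - 1) ^ α := by rw [← mul_pow]; ring
  have sub_one_ne : x - 1 ≠ 0 := sub_ne_zero.mpr hx.2.ne
  have add_one_ne : x + 1 ≠ 0 := by linarith [hx.1]
  have sign_sq : ((-1 : ℝ) ^ k) * (-1) ^ k = 1 := by rw [← mul_pow]; norm_num
  rw [jacobiFormula, weight_eq, iteratedDeriv_const_mul_field, iteratedDeriv_polynomial_eval,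
    iterate_derivative_jacobiWeight]
  simp only [zpow_neg, zpow_natCast, jacobiWeight, eval_mul, eval_C, eval_pow, eval_sub, eval_add,
    eval_X, eval_one, one_sub_pow, add_comm 1 x]
  field_simp
  linear_combination (-1) ^ α * (jacobiPoly ℝ k α β).eval x * sign_sq

lemma IsJacobi.eq_eval_jacobiPoly {J : ℕ → ℕ → ℕ → ℝ → ℝ} (hJ : IsJacobi J) (k α β : ℕ) (x : ℝ) :
    J k α β x = (jacobiPoly ℝ k α β).eval x := by
  obtain ⟨⟨p, hp⟩, hformula⟩ := hJ k α β
  have hpoly : p = jacobiPoly ℝ k α β := by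
    refine eq_of_infinite_eval_eq _ _
      ((Set.Ioo_infinite (by norm_num : (-1 : ℝ) < 1)).mono fun y hy => ?_)
    rw [Set.mem_ofPred_eq, ← hp, hformula y hy, jacobiFormula_eq_eval_jacobiPoly k α β hy]
  rw [hp, hpoly]

end JacobiPolynomials

section CosineComposition

lemma hasDerivAt_eval_cos_mul (q : Polynomial ℝ) (c θ : ℝ) :
    HasDerivAt (fun x => q.eval (cos (c * x)))
      (-(c * sin (c * θ) * q.derivative.eval (cos (c * θ)))) θ := by
  have hcos : HasDerivAt (fun x => cos (c * x)) (-sin (c * θ) * c) θ := by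
    simpa using! ((hasDerivAt_id θ).const_mul c).cos
  convert! (q.hasDerivAt _).comp θ hcos using 1
  ring

lemma deriv_eval_cos_mul (q : Polynomial ℝ) (c θ : ℝ) :
    deriv (fun x => q.eval (cos (c * x))) θ =
      -(c * sin (c * θ) * q.derivative.eval (cos (c * θ))) :=
  (hasDerivAt_eval_cos_mul q c θ).deriv

lemma iteratedDeriv_two_eval_cos_mul (q : Polynomial ℝ) (c θ : ℝ) :
    iteratedDeriv 2 (fun x => q.eval (cos (c * x))) θ =
      c ^ 2 * (sin (c * θ) ^ 2 * q.derivative.derivative.eval (cos (c * θ)) -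
        cos (c * θ) * q.derivative.eval (cos (c * θ))) := by
  have hsin : HasDerivAt (fun x => sin (c * x)) (cos (c * θ) * c) θ := by
    simpa using! ((hasDerivAt_id θ).const_mul c).sin
  rw [iteratedDeriv_succ, iteratedDeriv_one, funext (deriv_eval_cos_mul q c)]
  convert! ((hsin.const_mul c).mul (hasDerivAt_eval_cos_mul q.derivative c θ)).neg.deriv using 1
  ring

lemma contDiff_eval_cos_mul (q : Polynomial ℝ) (c : ℝ) {N : WithTop ℕ∞} :
    ContDiff ℝ N (fun x => q.eval (cos (c * x))) :=
  ContDiff.comp (g := fun x => q.eval x) (q.contDiff_aeval N)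
    (contDiff_cos.comp (contDiff_const.mul contDiff_id))

end CosineComposition

section FiberModes

open Polynomial Polynomial.Chebyshev

/-- The spherical function `sin ((m+1)η) / sin η` of the `SU(2)` fibre, written as
`U_m (cos η)` with `U_m` the Chebyshev polynomial of the second kind so that it is smooth also
where `sin η = 0`. -/
def fiberMode (m : ℕ) (η : ℝ) : ℝ := (U ℝ m).eval (cos η)

lemma contDiff_fiberMode (m : ℕ) {N : WithTop ℕ∞} : ContDiff ℝ N (fiberMode m) := by
  simpa [fiberMode] using! contDiff_eval_cos_mul (U ℝ m) 1

lemma vertFactor_eq_fiberMode (m : ℕ) {η : ℝ} (hη : sin η ≠ 0) :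
    vertFactor m η = fiberMode m η := by
  have hη0 : η ≠ 0 := by rintro rfl; exact hη sin_zero
  rw [vertFactor, if_neg hη0, div_eq_iff hη, fiberMode, U_real_cos]
  norm_cast

lemma fiberMode_ode (m : ℕ) {η : ℝ} (hη : sin η ≠ 0) :
    iteratedDeriv 2 (fiberMode m) η + 2 * cot η * deriv (fiberMode m) η =
      -(m * (m + 2)) * fiberMode m η := by
  have hfiber : fiberMode m = fun x => (U ℝ m).eval (cos (1 * x)) := by
    simp [fiberMode, funext_iff]
  have ode := congrArg (eval (cos η))
    (one_sub_X_sq_mul_derivative_derivative_U_eq_poly_in_U (R := ℝ) m)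
  rw [hfiber, iteratedDeriv_two_eval_cos_mul, deriv_eval_cos_mul]
  simp only [Function.iterate_succ, Function.iterate_zero, id_eq, Function.comp_apply, eval_mul,
    eval_sub, eval_one, eval_pow, eval_X, Int.cast_natCast, eval_ofNat, eval_add,
    eval_natCast] at ode
  simp only [one_mul, cot_eq_cos_div_sin]
  field_simp
  rw [sin_sq]
  linear_combination ode

lemma fiberMode_add_two (m : ℕ) :
    fiberMode (m + 2) = (fun η => 2 * cos ((m + 2 : ℝ) * η)) + fiberMode m := by
  funext η
  have h := congrArg (eval (cos η)) (U_eq_two_mul_T_add_U ℝ m)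
  simp only [eval_add, eval_mul, eval_ofNat, T_real_cos] at h
  simpa [fiberMode] using h

lemma abs_iteratedDeriv_cos_mul_le (i : ℕ) (c η : ℝ) :
    |iteratedDeriv i (fun x => cos (c * x)) η| ≤ |c| ^ i := by
  rw [iteratedDeriv_comp_const_mul contDiff_cos c, abs_mul, abs_pow]
  exact mul_le_of_le_one_right (by positivity) (abs_iteratedDeriv_cos_le_one i _)

lemma abs_iteratedDeriv_fiberMode_le (i m : ℕ) (η : ℝ) :
    |iteratedDeriv i (fiberMode m) η| ≤ (m + 1) * (m : ℝ) ^ i := by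
  induction m using Nat.twoStepInduction with
  | zero =>
    have hconst : fiberMode 0 = fun _ => 1 := by simp [fiberMode, funext_iff]
    rcases i with _ | i <;> simp [hconst, iteratedDeriv_const]
  | one =>
    have hcos : fiberMode 1 = fun x => 2 * cos (1 * x) := by simp [fiberMode, funext_iff]
    rw [hcos, iteratedDeriv_const_mul_field, abs_mul]
    have := abs_iteratedDeriv_cos_mul_le i 1 η
    norm_num at this ⊢
    exact this
  | more m ih _ =>
    have hcos := abs_iteratedDeriv_cos_mul_le i (m + 2) η
    rw [abs_of_nonneg (by positivity : (0 : ℝ) ≤ m + 2)] at hcos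
    have hpow : (m : ℝ) ^ i ≤ (m + 2 : ℝ) ^ i := by gcongr; linarith
    rw [fiberMode_add_two, iteratedDeriv_add (by fun_prop) (contDiff_fiberMode m).contDiffAt,
      iteratedDeriv_const_mul_field]
    push_cast
    calc _ ≤ 2 * (m + 2 : ℝ) ^ i + (m + 1) * (m : ℝ) ^ i := by
          refine (abs_add_le _ _).trans (add_le_add ?_ ih)
          rw [abs_mul, abs_two]
          gcongr
      _ ≤ 2 * (m + 2 : ℝ) ^ i + (m + 1) * (m + 2 : ℝ) ^ i := by gcongr
      _ = (m + 2 + 1) * (m + 2 : ℝ) ^ i := by ring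

end FiberModes

section RadialModes

open Polynomial

lemma deriv_sin_pow_mul_cos_pow (a b : ℕ) :
    deriv (fun x => sin x ^ a * cos x ^ b) = fun x =>
      a * (sin x ^ (a - 1) * cos x ^ (b + 1)) - b * (sin x ^ (a + 1) * cos x ^ (b - 1)) := by
  funext x
  convert! (((hasDerivAt_sin x).fun_pow a).fun_mul ((hasDerivAt_cos x).fun_pow b)).deriv using 1
  ring

-- Differentiation preserves the degree `a + b` in `(sin, cos)`, so each derivative costs a factor
-- of at most `a + b`.
lemma abs_iteratedDeriv_sin_pow_mul_cos_pow_le (i a b : ℕ) (x : ℝ) :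
    |iteratedDeriv i (fun y => sin y ^ a * cos y ^ b) x| ≤ (a + b : ℝ) ^ i := by
  induction i generalizing a b with
  | zero =>
    rw [iteratedDeriv_zero, abs_mul, abs_pow, abs_pow, pow_zero]
    exact mul_le_one₀ (pow_le_one₀ (abs_nonneg _) (abs_sin_le_one x)) (by positivity)
      (pow_le_one₀ (abs_nonneg _) (abs_cos_le_one x))
  | succ i ih =>
    have weighted_le (c d e : ℕ) (hdeg : c ≠ 0 → (d + e : ℝ) = a + b) :
        |c * iteratedDeriv i (fun y => sin y ^ d * cos y ^ e) x| ≤ c * (a + b : ℝ) ^ i := by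
      rcases eq_or_ne c 0 with rfl | hc
      · simp
      · rw [abs_mul, Nat.abs_cast, ← hdeg hc]
        gcongr
        exact ih d e
    rw [iteratedDeriv_succ', deriv_sin_pow_mul_cos_pow,
      iteratedDeriv_fun_sub (by fun_prop) (by fun_prop), iteratedDeriv_const_mul_field,
      iteratedDeriv_const_mul_field]
    calc _ ≤ a * (a + b : ℝ) ^ i + b * (a + b : ℝ) ^ i := by
          refine (abs_sub _ _).trans (add_le_add (weighted_le a (a - 1) (b + 1) fun ha => ?_)
            (weighted_le b (a + 1) (b - 1) fun hb => ?_))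
          · exact_mod_cast (by omega : a - 1 + (b + 1) = a + b)
          · exact_mod_cast (by omega : a + 1 + (b - 1) = a + b)
      _ = (a + b : ℝ) ^ (i + 1) := by ring

/-- The function `cos^m r · P_k^{(α,β)}(cos 2r)`, the radial part of an eigenfunction. -/
def radialMode (k α β m : ℕ) (r : ℝ) : ℝ := cos r ^ m * (jacobiPoly ℝ k α β).eval (cos (2 * r))

lemma contDiff_radialMode (k α β m : ℕ) {N : WithTop ℕ∞} : ContDiff ℝ N (radialMode k α β m) :=
  (contDiff_cos.pow m).mul (contDiff_eval_cos_mul _ 2)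

lemma radialMode_eq_sum (k α β m : ℕ) :
    radialMode k α β m = fun r => ∑ ij ∈ antidiagonal k,
      ((α + k).choose ij.1 * (β + k).choose ij.2 * (-1) ^ ij.2 : ℝ) *
        (sin r ^ (2 * ij.2) * cos r ^ (2 * ij.1 + m)) := by
  funext r
  have cos_two_mul_sub_one : cos (2 * r) - 1 = -2 * sin r ^ 2 := by rw [cos_two_mul, sin_sq]; ring
  have cos_two_mul_add_one : cos (2 * r) + 1 = 2 * cos r ^ 2 := by rw [cos_two_mul]; ring
  simp only [radialMode, jacobiPoly, jacobiWeight, eval_mul, eval_C, eval_finsetSum, eval_natCast,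
    eval_pow, eval_sub, eval_add, eval_X, eval_one, cos_two_mul_sub_one, cos_two_mul_add_one,
    Finset.mul_sum]
  refine Finset.sum_congr rfl fun ij hij => ?_
  have two_pow_ne : (2 : ℝ) ^ k ≠ 0 := by positivity
  have two_pow_eq : (2 : ℝ) ^ k = 2 ^ ij.1 * 2 ^ ij.2 := by rw [← pow_add, mem_antidiagonal.mp hij]
  rw [neg_eq_neg_one_mul, mul_pow, mul_pow, mul_pow]
  field_simp
  rw [two_pow_eq]
  ring

lemma abs_iteratedDeriv_radialMode_le (i k α β m : ℕ) (r : ℝ) :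
    |iteratedDeriv i (radialMode k α β m) r| ≤
      ((α + k + (β + k)).choose k : ℝ) * (2 * k + m : ℝ) ^ i := by
  rw [radialMode_eq_sum, iteratedDeriv_fun_sum (fun ij _ => by fun_prop), Nat.add_choose_eq]
  push_cast
  rw [Finset.sum_mul]
  refine (Finset.abs_sum_le_sum_abs _ _).trans (Finset.sum_le_sum fun ij hij => ?_)
  have degree_eq : ((2 * ij.2 : ℕ) : ℝ) + ((2 * ij.1 + m : ℕ) : ℝ) = 2 * k + m := by
    exact_mod_cast (by have := mem_antidiagonal.mp hij; omega)
  rw [iteratedDeriv_const_mul_field, abs_mul, ← degree_eq]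
  refine mul_le_mul (le_of_eq ?_) (abs_iteratedDeriv_sin_pow_mul_cos_pow_le i _ _ r)
    (abs_nonneg _) (by positivity)
  simp [abs_mul, abs_pow]

lemma jacobiPoly_cos_two_mul_ode (k α β : ℕ) {r : ℝ} (hsin : sin r ≠ 0) (hcos : cos r ≠ 0) :
    iteratedDeriv 2 (fun x => (jacobiPoly ℝ k α β).eval (cos (2 * x))) r +
        ((2 * α + 1) * cot r - (2 * β + 1) * tan r) *
          deriv (fun x => (jacobiPoly ℝ k α β).eval (cos (2 * x))) r =
      -(4 * (k * (k + α + β + 1))) * (jacobiPoly ℝ k α β).eval (cos (2 * r)) := by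
  have ode := congrArg (eval (cos (2 * r))) (jacobiPoly_ode (K := ℝ) k α β)
  simp only [eval_add, eval_mul, eval_sub, eval_pow, eval_X, eval_one, eval_natCast,
    eval_ofNat] at ode
  rw [iteratedDeriv_two_eval_cos_mul, deriv_eval_cos_mul, cot_eq_cos_div_sin, tan_eq_sin_div_cos]
  have sin_sq_two : sin (2 * r) ^ 2 = 1 - cos (2 * r) ^ 2 := sin_sq _
  have drift : ((2 * α + 1) * (cos r / sin r) - (2 * β + 1) * (sin r / cos r)) * (2 * sin (2 * r)) =
      4 * ((α - β) + (α + β + 1) * cos (2 * r)) := by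
    rw [sin_two_mul, cos_two_mul]
    field_simp
    rw [sin_sq]
    ring
  rw [sin_sq_two]
  linear_combination (-4) * ode - (jacobiPoly ℝ k α β).derivative.eval (cos (2 * r)) * drift

lemma deriv_cos_pow (m : ℕ) {r : ℝ} (hcos : cos r ≠ 0) :
    deriv (fun x => cos x ^ m) r = -(m * tan r) * cos r ^ m := by
  have hderiv := congrFun (deriv_sin_pow_mul_cos_pow 0 m) r
  simp only [pow_zero, one_mul, CharP.cast_eq_zero, zero_mul, zero_sub, zero_add, pow_one] at hderiv
  rw [hderiv, tan_eq_sin_div_cos]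
  rcases m with _ | m
  · simp
  · rw [Nat.add_sub_cancel, pow_succ]
    field_simp

lemma iteratedDeriv_two_cos_pow (m : ℕ) {r : ℝ} (hcos : cos r ≠ 0) :
    iteratedDeriv 2 (fun x => cos x ^ m) r = m * ((m - 1) * tan r ^ 2 - 1) * cos r ^ m := by
  have hderiv : deriv (fun x => cos x ^ m) =ᶠ[𝓝 r] fun x => -(m * tan x) * cos x ^ m :=
    (continuous_cos.continuousAt.eventually_ne hcos).mono fun x hx => deriv_cos_pow m hx
  have hcosm : HasDerivAt (fun x => cos x ^ m) (-(m * tan r) * cos r ^ m) r := by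
    rw [← deriv_cos_pow m hcos]
    exact (by fun_prop : DifferentiableAt ℝ (fun x => cos x ^ m) r).hasDerivAt
  rw [iteratedDeriv_succ, iteratedDeriv_one, hderiv.deriv_eq,
    ((((hasDerivAt_tan hcos).const_mul (m : ℝ)).fun_neg).fun_mul hcosm).deriv,
    one_div, ← inv_one_add_tan_sq hcos, inv_inv]
  ring

lemma iteratedDeriv_two_add_mul_deriv_cos_pow_mul (m : ℕ) (a b : ℝ) {g : ℝ → ℝ}
    (hg : ContDiff ℝ 2 g) {r : ℝ} (hsin : sin r ≠ 0) (hcos : cos r ≠ 0) :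
    iteratedDeriv 2 (fun x => cos x ^ m * g x) r +
        (a * cot r - b * tan r) * deriv (fun x => cos x ^ m * g x) r =
      cos r ^ m * (iteratedDeriv 2 g r + (a * cot r - (b + 2 * m) * tan r) * deriv g r +
        m * ((m - 1 + b) * tan r ^ 2 - 1 - a) * g r) := by
  have tan_mul_cot : tan r * cot r = 1 := by
    rw [tan_eq_sin_div_cos, cot_eq_cos_div_sin]
    field_simp
  have hcosm : ContDiff ℝ 2 fun x => cos x ^ m := contDiff_cos.pow m
  have hderiv : deriv (fun x => cos x ^ m * g x) r =
      cos r ^ m * (deriv g r - m * tan r * g r) := by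
    rw [deriv_fun_mul (hcosm.differentiable two_ne_zero r) (hg.differentiable two_ne_zero r),
      deriv_cos_pow m hcos]
    ring
  have hderiv2 : iteratedDeriv 2 (fun x => cos x ^ m * g x) r = cos r ^ m *
      (iteratedDeriv 2 g r - 2 * m * tan r * deriv g r + m * ((m - 1) * tan r ^ 2 - 1) * g r) := by
    have leibniz := iteratedDeriv_fun_mul (n := 2) (x := r) hcosm.contDiffAt hg.contDiffAt
    simp only [Nat.reduceAdd, Finset.sum_range_succ, Finset.range_one, Finset.sum_singleton,
      Nat.choose_zero_right, Nat.cast_one, iteratedDeriv_zero, one_mul, tsub_zero,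
      Nat.choose_succ_self_right, Nat.cast_ofNat, iteratedDeriv_one, deriv_cos_pow m hcos,
      Nat.add_one_sub_one, Nat.choose_self, iteratedDeriv_two_cos_pow m hcos,
      tsub_self] at leibniz
    rw [leibniz]
    ring
  rw [hderiv, hderiv2]
  linear_combination (-a * m * g r * cos r ^ m) * tan_mul_cot

lemma radialMode_ode (k α β m : ℕ) {r : ℝ} (hsin : sin r ≠ 0) (hcos : cos r ≠ 0) :
    iteratedDeriv 2 (radialMode k α β m) r +
        ((2 * α + 1) * cot r - (2 * (β - m) + 1) * tan r) * deriv (radialMode k α β m) r =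
      (m * (2 * β - m) * tan r ^ 2 - (4 * (k * (k + α + β + 1)) + 2 * m * (α + 1))) *
        radialMode k α β m r := by
  have conj := iteratedDeriv_two_add_mul_deriv_cos_pow_mul m (2 * α + 1) (2 * (β - m) + 1)
    (contDiff_eval_cos_mul (jacobiPoly ℝ k α β) 2) hsin hcos
  have ode := jacobiPoly_cos_two_mul_ode k α β hsin hcos
  rw [show radialMode k α β m = fun x => cos x ^ m * (jacobiPoly ℝ k α β).eval (cos (2 * x))
    from rfl, conj]
  linear_combination cos r ^ m * ode

end RadialModes

section TermwiseDifferentiation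

variable {ι : Type*}

lemma hasSum_iteratedDeriv_tsum {F : Type*} [NormedAddCommGroup F] [NormedSpace ℝ F]
    [CompleteSpace F] {f : ι → ℝ → F} {u : ι → ℝ} {N : ℕ} (hf : ∀ i, ContDiff ℝ N (f i))
    (hu : Summable u) (hbound : ∀ j ≤ N, ∀ i x, ‖iteratedDeriv j (f i) x‖ ≤ u i) {j : ℕ}
    (hj : j ≤ N) (x : ℝ) :
    HasSum (fun i => iteratedDeriv j (f i) x) (iteratedDeriv j (fun y => ∑' i, f i y) x) := by
  have hsummable : Summable fun i => iteratedFDeriv ℝ j (f i) x :=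
    .of_norm_bounded hu fun i => by
      rw [norm_iteratedFDeriv_eq_norm_iteratedDeriv]
      exact hbound j hj i x
  have htsum := iteratedFDeriv_tsum_apply (v := fun _ => u) (N := N) hf (fun _ _ => hu)
    (fun k i y hk => by
      rw [norm_iteratedFDeriv_eq_norm_iteratedDeriv]
      exact hbound k (by exact_mod_cast hk) i y)
    (by exact_mod_cast hj) x
  simp only [iteratedDeriv_eq_iteratedFDeriv, htsum]
  exact ContinuousMultilinearMap.hasSum_eval hsummable.hasSum _

lemma hasDerivAt_mul_exp_neg_mul (a l s : ℝ) :
    HasDerivAt (fun s => a * exp (-l * s)) (-l * (a * exp (-l * s))) s := by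
  convert! (((hasDerivAt_id s).const_mul (-l)).exp).const_mul a using 1
  simp only [id_eq, mul_one]
  ring

lemma hasSum_deriv_tsum_mul_exp {a l : ι → ℝ} {τ t : ℝ} (hl : ∀ i, 0 ≤ l i) (hτ : τ < t)
    (hsum : Summable fun i => (1 + l i) * |a i| * exp (-l i * τ)) :
    HasSum (fun i => deriv (fun s => a i * exp (-l i * s)) t)
      (deriv (fun s => ∑' i, a i * exp (-l i * s)) t) := by
  have hweighted (i : ι) {c s : ℝ} (hc : c ≤ 1 + l i) (hs : τ < s) :
      c * |a i| * exp (-l i * s) ≤ (1 + l i) * |a i| * exp (-l i * τ) := by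
    have hexp : exp (-l i * s) ≤ exp (-l i * τ) :=
      exp_le_exp.mpr (mul_le_mul_of_nonpos_left hs.le (neg_nonpos.mpr (hl i)))
    have : 0 ≤ 1 + l i := add_nonneg zero_le_one (hl i)
    gcongr
  have hterm (i : ι) : ‖a i * exp (-l i * t)‖ ≤ (1 + l i) * |a i| * exp (-l i * τ) := by
    simpa [abs_mul] using hweighted i (le_add_of_nonneg_right (hl i)) hτ
  have hterm' (i : ι) {s : ℝ} (hs : τ < s) :
      ‖-l i * (a i * exp (-l i * s))‖ ≤ (1 + l i) * |a i| * exp (-l i * τ) := by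
    simpa [abs_mul, abs_of_nonneg (hl i), mul_assoc] using
      hweighted i (le_add_of_nonneg_left zero_le_one) hs
  have htsum := hasDerivAt_tsum_of_isPreconnected hsum isOpen_Ioi isPreconnected_Ioi
    (fun i s _ => hasDerivAt_mul_exp_neg_mul (a i) (l i) s) (fun i s hs => hterm' i hs) (y₀ := t) hτ
    (.of_norm_bounded hsum hterm) hτ
  simp only [(hasDerivAt_mul_exp_neg_mul _ _ _).deriv, htsum.deriv]
  exact (Summable.of_norm_bounded hsum fun i => hterm' i hτ).hasSum

end TermwiseDifferentiation

section Summability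

lemma summable_exp_mul_sub_mul_sq (c : ℝ) {a : ℝ} (ha : 0 < a) :
    Summable fun k : ℕ => exp (c * k - a * k ^ 2) := by
  have hgeom : Summable fun k : ℕ => exp ((c + 1) ^ 2 / (4 * a)) * exp (k * (-1)) :=
    (summable_exp_nat_mul_iff.mpr (by norm_num)).mul_left _
  refine hgeom.of_nonneg_of_le (fun k => (exp_pos _).le) fun k => ?_
  rw [← exp_add, exp_le_exp]
  have complete_square : (c + 1) ^ 2 / (4 * a) + k * (-1) - (c * k - a * k ^ 2) =
      (2 * a * k - (c + 1)) ^ 2 / (4 * a) := by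
    field_simp
    ring
  have : 0 ≤ (2 * a * k - (c + 1)) ^ 2 / (4 * a) := by positivity
  linarith

lemma pow_le_mul_exp {τ x : ℝ} (hτ : 0 < τ) (hx : 0 ≤ x) (D : ℕ) :
    x ^ D ≤ D.factorial / τ ^ D * exp (τ * x) := by
  have h := pow_div_factorial_le_exp (τ * x) (by positivity) D
  rw [mul_pow, div_le_iff₀ (by positivity)] at h
  rw [div_mul_eq_mul_div, le_div_iff₀ (by positivity)]
  linarith

lemma pow_le_exp_mul_add {τ x : ℝ} (hτ : 0 < τ) (hx : 0 ≤ x) (k : ℕ) :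
    x ^ k ≤ exp (k * (τ⁻¹ + τ * x)) := by
  rw [exp_nat_mul]
  gcongr
  calc x = τ⁻¹ * (τ * x) := by field_simp
    _ ≤ exp τ⁻¹ * exp (τ * x) := by
        gcongr
        · linarith [add_one_le_exp τ⁻¹]
        · linarith [add_one_le_exp (τ * x)]
    _ = exp (τ⁻¹ + τ * x) := (exp_add _ _).symm

end Summability

section HopfModes

variable {n : ℕ} {mk : ℕ × ℕ}

/-- The total degree `2k + m + 2n` of the mode `(m, k)`, the size parameter for all estimates. -/
def modeDegree (n : ℕ) (mk : ℕ × ℕ) : ℕ := 2 * mk.2 + mk.1 + 2 * n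

/-- The decay rate `4 (k (k + 2n + m + 1) + n m)` in time of the mode `(m, k)`. -/
def modeEigenvalue (n : ℕ) (mk : ℕ × ℕ) : ℝ :=
  4 * ((mk.2 : ℝ) * (mk.2 + 2 * n + mk.1 + 1) + n * mk.1)

/-- The normalizing constant `α_{k,m}` of the mode `(m, k)`. -/
def modeCoeff (n : ℕ) (mk : ℕ × ℕ) : ℝ :=
  (Real.Gamma (2 * n) / (2 * π ^ (2 * n + 2))) *
    (2 * (mk.2 : ℝ) + mk.1 + 2 * n + 1) * ((mk.1 : ℝ) + 1) *
    (Nat.choose (mk.2 + mk.1 + 2 * n) (2 * n - 1) : ℝ)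

/-- The function of `r` in the mode `(m, k)` of the quaternionic Hopf fibration. -/
def hopfRadialMode (n : ℕ) (mk : ℕ × ℕ) : ℝ → ℝ := radialMode mk.2 (2 * n - 1) (mk.1 + 1) mk.1

/-- A bound, uniform in `(r, η)`, for the product of the radial and fibre parts of the mode
`(m, k)` and of their derivatives of order at most two. -/
def modeBound (n : ℕ) (mk : ℕ × ℕ) : ℝ :=
  (mk.1 + 1 : ℝ) ^ 3 * ((modeDegree n mk).choose mk.2 * (modeDegree n mk : ℝ) ^ 2)

/-- A majorant of the mode `(m, k)`, of its time derivative and of its first two derivatives in `r`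
and in `η`, for all times after `τ`. -/
def modeMajorant (n : ℕ) (τ : ℝ) (mk : ℕ × ℕ) : ℝ :=
  (1 + modeEigenvalue n mk) * (modeCoeff n mk * modeBound n mk) * exp (-modeEigenvalue n mk * τ)

lemma modeEigenvalue_nonneg (n : ℕ) (mk : ℕ × ℕ) : 0 ≤ modeEigenvalue n mk := by
  unfold modeEigenvalue
  positivity

lemma modeCoeff_nonneg (n : ℕ) (mk : ℕ × ℕ) : 0 ≤ modeCoeff n mk := by
  have : 0 ≤ Real.Gamma (2 * n) := Gamma_nonneg_of_nonneg (by positivity)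
  unfold modeCoeff
  positivity

lemma modeBound_nonneg (n : ℕ) (mk : ℕ × ℕ) : 0 ≤ modeBound n mk := by
  unfold modeBound
  positivity

lemma abs_iteratedDeriv_fiberMode_mul_iteratedDeriv_hopfRadialMode_le (hn : 1 ≤ n) {i j : ℕ}
    (hi : i ≤ 2) (hj : j ≤ 2) (η r : ℝ) :
    |iteratedDeriv i (fiberMode mk.1) η * iteratedDeriv j (hopfRadialMode n mk) r| ≤
      modeBound n mk := by
  obtain ⟨m, k⟩ := mk
  have hdegree : 2 * n - 1 + k + (m + 1 + k) = modeDegree n (m, k) := by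
    simp only [modeDegree]
    omega
  have hdegree_le : (2 * k + m : ℝ) ≤ modeDegree n (m, k) := by
    exact_mod_cast (by simp [modeDegree] : 2 * k + m ≤ modeDegree n (m, k))
  have one_le_degree : (1 : ℝ) ≤ modeDegree n (m, k) := by
    exact_mod_cast (by simp only [modeDegree]; omega : 1 ≤ modeDegree n (m, k))
  rw [abs_mul, modeBound]
  refine mul_le_mul ?_ ?_ (abs_nonneg _) (by positivity)
  · calc _ ≤ (m + 1) * (m : ℝ) ^ i := abs_iteratedDeriv_fiberMode_le i m η
      _ ≤ (m + 1) * (m + 1 : ℝ) ^ i := by gcongr; linarith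
      _ ≤ (m + 1) * (m + 1 : ℝ) ^ 2 := by gcongr; linarith [m.cast_nonneg (α := ℝ)]
      _ = (m + 1 : ℝ) ^ 3 := by ring
  · calc _ ≤ _ := abs_iteratedDeriv_radialMode_le j k (2 * n - 1) (m + 1) m r
      _ ≤ ((modeDegree n (m, k)).choose k : ℝ) * (modeDegree n (m, k) : ℝ) ^ j := by
        rw [hdegree]
        gcongr
      _ ≤ _ := by gcongr

lemma modeMajorant_le (hn : 1 ≤ n) (τ : ℝ) :
    modeMajorant n τ mk ≤ 26 * (Real.Gamma (2 * n) / (2 * π ^ (2 * n + 2))) *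
      ((modeDegree n mk : ℝ) ^ (mk.2 + (2 * n + 8)) * exp (-modeEigenvalue n mk * τ)) := by
  obtain ⟨m, k⟩ := mk
  set K := Real.Gamma (2 * n) / (2 * π ^ (2 * n + 2))
  have : 0 ≤ K := div_nonneg (Gamma_nonneg_of_nonneg (by positivity)) (by positivity)
  have hn' : (1 : ℝ) ≤ n := by exact_mod_cast hn
  have hm : (0 : ℝ) ≤ m := m.cast_nonneg
  have hk : (0 : ℝ) ≤ k := k.cast_nonneg
  have hdegree : (modeDegree n (m, k) : ℝ) = 2 * k + m + 2 * n := by simp [modeDegree]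
  set N := (modeDegree n (m, k) : ℝ)
  have eigenvalue_le : 1 + modeEigenvalue n (m, k) ≤ 13 * N ^ 2 := by
    simp only [modeEigenvalue]
    rw [hdegree]
    nlinarith [mul_nonneg hm hk]
  have choose_le : ((k + m + 2 * n).choose (2 * n - 1) : ℝ) ≤ N ^ (2 * n - 1) := by
    calc _ ≤ ((k + m + 2 * n : ℕ) : ℝ) ^ (2 * n - 1) := by exact_mod_cast Nat.choose_le_pow _ _
      _ ≤ N ^ (2 * n - 1) := by
        push_cast
        gcongr
        linarith
  have coeff_le : modeCoeff n (m, k) ≤ 2 * K * N ^ (2 * n + 1) := by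
    calc modeCoeff n (m, k) ≤ K * (2 * N) * N * N ^ (2 * n - 1) := by
          unfold modeCoeff
          gcongr <;> linarith
      _ = 2 * K * N ^ (2 * n - 1 + 2) := by ring
      _ = 2 * K * N ^ (2 * n + 1) := by congr 2; omega
  have bound_le : modeBound n (m, k) ≤ N ^ 3 * (N ^ k * N ^ 2) := by
    unfold modeBound
    gcongr
    · linarith
    · exact (Nat.cast_le.mpr (Nat.choose_le_pow _ k)).trans_eq (Nat.cast_pow _ k)
  calc modeMajorant n τ (m, k)
      ≤ 13 * N ^ 2 * (2 * K * N ^ (2 * n + 1) * (N ^ 3 * (N ^ k * N ^ 2))) *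
          exp (-modeEigenvalue n (m, k) * τ) := by
        have := modeCoeff_nonneg n (m, k)
        have := modeBound_nonneg n (m, k)
        unfold modeMajorant
        gcongr
    _ = _ := by ring

lemma summable_modeDegree_pow_mul_exp (hn : 1 ≤ n) {τ : ℝ} (hτ : 0 < τ) (D : ℕ) :
    Summable fun mk : ℕ × ℕ =>
      (modeDegree n mk : ℝ) ^ (mk.2 + D) * exp (-modeEigenvalue n mk * τ) := by
  have hgauss : Summable fun mk : ℕ × ℕ => D.factorial / τ ^ D * exp (2 * n * τ) *
      (exp (mk.1 * (-(3 * τ))) * exp ((2 * τ + τ⁻¹) * mk.2 - 2 * τ * mk.2 ^ 2)) :=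
    ((summable_exp_nat_mul_iff.mpr (by linarith)).mul_of_nonneg
      (summable_exp_mul_sub_mul_sq _ (by positivity)) (fun _ => (exp_pos _).le)
      (fun _ => (exp_pos _).le)).mul_left _
  refine hgauss.of_nonneg_of_le (fun mk => by positivity) fun mk => ?_
  obtain ⟨m, k⟩ := mk
  have hn' : (1 : ℝ) ≤ n := by exact_mod_cast hn
  have hm : (0 : ℝ) ≤ m := m.cast_nonneg
  have hk : (0 : ℝ) ≤ k := k.cast_nonneg
  have hdegree : (modeDegree n (m, k) : ℝ) = 2 * k + m + 2 * n := by simp [modeDegree]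
  set N := (modeDegree n (m, k) : ℝ)
  have hN : 0 ≤ N := Nat.cast_nonneg _
  have exponent_le : k * (τ⁻¹ + τ * N) + τ * N - modeEigenvalue n (m, k) * τ ≤
      2 * n * τ + m * (-(3 * τ)) + ((2 * τ + τ⁻¹) * k - 2 * τ * k ^ 2) := by
    have eigenvalue_ge : k * N + 2 * k ^ 2 + 4 * m ≤ modeEigenvalue n (m, k) := by
      simp only [modeEigenvalue]
      rw [hdegree]
      nlinarith [mul_nonneg hm hk, mul_nonneg (sub_nonneg.mpr hn') hm]
    have := mul_le_mul_of_nonneg_right eigenvalue_ge hτ.le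
    rw [hdegree] at this ⊢
    linarith
  calc N ^ (k + D) * exp (-modeEigenvalue n (m, k) * τ)
      ≤ exp (k * (τ⁻¹ + τ * N)) * (D.factorial / τ ^ D * exp (τ * N)) *
          exp (-modeEigenvalue n (m, k) * τ) := by
        rw [pow_add]
        gcongr
        · exact pow_le_exp_mul_add hτ hN k
        · exact pow_le_mul_exp hτ hN D
    _ = D.factorial / τ ^ D *
          exp (k * (τ⁻¹ + τ * N) + τ * N - modeEigenvalue n (m, k) * τ) := by
        rw [sub_eq_add_neg, exp_add, exp_add, neg_mul]
        ring
    _ ≤ D.factorial / τ ^ D *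
          exp (2 * n * τ + m * (-(3 * τ)) + ((2 * τ + τ⁻¹) * k - 2 * τ * k ^ 2)) := by
        gcongr
    _ = _ := by
        rw [exp_add, exp_add]
        ring

lemma summable_modeMajorant (hn : 1 ≤ n) {τ : ℝ} (hτ : 0 < τ) : Summable (modeMajorant n τ) := by
  refine ((summable_modeDegree_pow_mul_exp hn hτ (2 * n + 8)).mul_left _).of_nonneg_of_le
    (fun mk => ?_) (fun mk => modeMajorant_le hn τ)
  have := modeEigenvalue_nonneg n mk
  have := modeCoeff_nonneg n mk
  have := modeBound_nonneg n mk
  unfold modeMajorant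
  positivity

lemma abs_modeCoeff_mul_le_modeMajorant (n : ℕ) (τ : ℝ) (mk : ℕ × ℕ) {x : ℝ}
    (hx : |x| ≤ modeBound n mk) :
    |modeCoeff n mk * exp (-modeEigenvalue n mk * τ) * x| ≤ modeMajorant n τ mk := by
  have hcoeff := modeCoeff_nonneg n mk
  have heigen := modeEigenvalue_nonneg n mk
  calc _ = 1 * (modeCoeff n mk * |x|) * exp (-modeEigenvalue n mk * τ) := by
        rw [abs_mul, abs_of_nonneg (by positivity)]
        ring
    _ ≤ modeMajorant n τ mk := by
        unfold modeMajorant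
        gcongr
        linarith

end HopfModes

section HeatKernel

variable {n : ℕ} {J : ℕ → ℕ → ℕ → ℝ → ℝ} {t r η : ℝ}

/-- The radial part of the subelliptic Laplacian of the quaternionic Hopf fibration. -/
def subLaplacian (n : ℕ) (u : ℝ → ℝ → ℝ) (r η : ℝ) : ℝ :=
  iteratedDeriv 2 (fun ρ => u ρ η) r +
    ((4 * (n : ℝ) - 1) * cot r - 3 * tan r) * deriv (fun ρ => u ρ η) r +
    tan r ^ 2 * (iteratedDeriv 2 (fun e => u r e) η + 2 * cot η * deriv (fun e => u r e) η)

lemma pTerm_eq (hJ : IsJacobi J) (n : ℕ) (t r : ℝ) (hη : sin η ≠ 0) (mk : ℕ × ℕ) :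
    pTerm n J t r η mk = modeCoeff n mk * exp (-modeEigenvalue n mk * t) *
      (fiberMode mk.1 η * hopfRadialMode n mk r) := by
  rw [pTerm, vertFactor_eq_fiberMode mk.1 hη, hJ.eq_eval_jacobiPoly]
  simp only [modeCoeff, modeEigenvalue, hopfRadialMode, radialMode]
  ring

lemma iteratedDeriv_pTerm_radial (hJ : IsJacobi J) (n : ℕ) (t r : ℝ) (hη : sin η ≠ 0)
    (mk : ℕ × ℕ) (j : ℕ) :
    iteratedDeriv j (fun ρ => pTerm n J t ρ η mk) r =
      modeCoeff n mk * exp (-modeEigenvalue n mk * t) *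
        (fiberMode mk.1 η * iteratedDeriv j (hopfRadialMode n mk) r) := by
  simp only [pTerm_eq hJ n t _ hη]
  rw [iteratedDeriv_const_mul_field, iteratedDeriv_const_mul_field]

lemma pTerm_eventuallyEq (hJ : IsJacobi J) (n : ℕ) (t r : ℝ) (hη : sin η ≠ 0) :
    ∀ᶠ e in 𝓝 η, ∀ mk : ℕ × ℕ, pTerm n J t r e mk =
      modeCoeff n mk * exp (-modeEigenvalue n mk * t) *
        (fiberMode mk.1 e * hopfRadialMode n mk r) :=
  (continuous_sin.continuousAt.eventually_ne hη).mono fun _ he mk => pTerm_eq hJ n t r he mk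

lemma iteratedDeriv_pTerm_fiber (hJ : IsJacobi J) (n : ℕ) (t r : ℝ) (hη : sin η ≠ 0)
    (mk : ℕ × ℕ) (i : ℕ) :
    iteratedDeriv i (fun e => pTerm n J t r e mk) η =
      modeCoeff n mk * exp (-modeEigenvalue n mk * t) *
        (iteratedDeriv i (fiberMode mk.1) η * hopfRadialMode n mk r) := by
  have heq : (fun e => pTerm n J t r e mk) =ᶠ[𝓝 η] fun e =>
      modeCoeff n mk * exp (-modeEigenvalue n mk * t) *
        (fiberMode mk.1 e * hopfRadialMode n mk r) :=
    (pTerm_eventuallyEq hJ n t r hη).mono fun _ he => he mk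
  rw [heq.iteratedDeriv_eq, iteratedDeriv_const_mul_field, iteratedDeriv_mul_const_field]

lemma deriv_pTerm_time (hJ : IsJacobi J) (n : ℕ) (t r : ℝ) (hη : sin η ≠ 0) (mk : ℕ × ℕ) :
    deriv (fun s => pTerm n J s r η mk) t = -modeEigenvalue n mk * pTerm n J t r η mk := by
  simp only [pTerm_eq hJ n _ r hη, mul_right_comm (modeCoeff n mk)]
  exact (hasDerivAt_mul_exp_neg_mul _ _ t).deriv

lemma deriv_pTerm_eq_subLaplacian (hn : 1 ≤ n) (hJ : IsJacobi J) (t : ℝ) (hsin : sin r ≠ 0)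
    (hcos : cos r ≠ 0) (hη : sin η ≠ 0) (mk : ℕ × ℕ) :
    deriv (fun s => pTerm n J s r η mk) t =
      subLaplacian n (fun ρ e => pTerm n J t ρ e mk) r η := by
  have radial := radialMode_ode mk.2 (2 * n - 1) (mk.1 + 1) mk.1 hsin hcos
  rw [← hopfRadialMode] at radial
  have fiber := fiberMode_ode mk.1 hη
  push_cast [Nat.cast_sub (by omega : 1 ≤ 2 * n)] at radial
  rw [deriv_pTerm_time hJ n t r hη, subLaplacian, ← iteratedDeriv_one, ← iteratedDeriv_one]
  simp only [iteratedDeriv_pTerm_radial hJ n t r hη, iteratedDeriv_pTerm_fiber hJ n t r hη,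
    pTerm_eq hJ n t r hη, modeEigenvalue, iteratedDeriv_one]
  set A := modeCoeff n mk * exp (-(4 * ((mk.2 : ℝ) * (mk.2 + 2 * n + mk.1 + 1) + n * mk.1)) * t)
  linear_combination (-A * fiberMode mk.1 η) * radial -
    A * tan r ^ 2 * hopfRadialMode n mk r * fiber

lemma abs_iteratedDeriv_pTerm_radial_le (hn : 1 ≤ n) (hJ : IsJacobi J) (t r : ℝ)
    (hη : sin η ≠ 0) (mk : ℕ × ℕ) {j : ℕ} (hj : j ≤ 2) :
    |iteratedDeriv j (fun ρ => pTerm n J t ρ η mk) r| ≤ modeMajorant n t mk := by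
  rw [iteratedDeriv_pTerm_radial hJ n t r hη]
  exact abs_modeCoeff_mul_le_modeMajorant n t mk
    (abs_iteratedDeriv_fiberMode_mul_iteratedDeriv_hopfRadialMode_le hn (Nat.zero_le 2) hj η r)

lemma summable_abs_pTerm (hn : 1 ≤ n) (hJ : IsJacobi J) (ht : 0 < t) (r : ℝ) (hη : sin η ≠ 0) :
    Summable fun mk => |pTerm n J t r η mk| :=
  (summable_modeMajorant hn ht).of_nonneg_of_le (fun _ => abs_nonneg _) fun mk =>
    abs_iteratedDeriv_pTerm_radial_le hn hJ t r hη mk (Nat.zero_le 2)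

lemma hasSum_iteratedDeriv_pKernel_radial (hn : 1 ≤ n) (hJ : IsJacobi J) (ht : 0 < t) (r : ℝ)
    (hη : sin η ≠ 0) {j : ℕ} (hj : j ≤ 2) :
    HasSum (fun mk => iteratedDeriv j (fun ρ => pTerm n J t ρ η mk) r)
      (iteratedDeriv j (fun ρ => pKernel n J t ρ η) r) := by
  refine hasSum_iteratedDeriv_tsum (N := 2) (fun mk => ?_) (summable_modeMajorant hn ht)
    (fun j hj mk ρ => abs_iteratedDeriv_pTerm_radial_le hn hJ t ρ hη mk hj) hj r
  simp only [pTerm_eq hJ n t _ hη]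
  exact contDiff_const.mul (contDiff_const.mul (contDiff_radialMode _ _ _ _))

lemma hasSum_iteratedDeriv_pKernel_fiber (hn : 1 ≤ n) (hJ : IsJacobi J) (ht : 0 < t) (r : ℝ)
    (hη : sin η ≠ 0) {i : ℕ} (hi : i ≤ 2) :
    HasSum (fun mk => iteratedDeriv i (fun e => pTerm n J t r e mk) η)
      (iteratedDeriv i (fun e => pKernel n J t r e) η) := by
  have hkernel : (fun e => pKernel n J t r e) =ᶠ[𝓝 η] fun e => ∑' mk : ℕ × ℕ,
      modeCoeff n mk * exp (-modeEigenvalue n mk * t) *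
        (fiberMode mk.1 e * hopfRadialMode n mk r) :=
    (pTerm_eventuallyEq hJ n t r hη).mono fun _ he => tsum_congr he
  have hmode (i : ℕ) (mk : ℕ × ℕ) (e : ℝ) :
      iteratedDeriv i (fun e => modeCoeff n mk * exp (-modeEigenvalue n mk * t) *
        (fiberMode mk.1 e * hopfRadialMode n mk r)) e =
      modeCoeff n mk * exp (-modeEigenvalue n mk * t) *
        (iteratedDeriv i (fiberMode mk.1) e * hopfRadialMode n mk r) := by
    rw [iteratedDeriv_const_mul_field, iteratedDeriv_mul_const_field]
  rw [hkernel.iteratedDeriv_eq]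
  simp only [iteratedDeriv_pTerm_fiber hJ n t r hη, ← hmode]
  refine hasSum_iteratedDeriv_tsum (N := 2)
    (fun mk => contDiff_const.mul ((contDiff_fiberMode _).mul contDiff_const))
    (summable_modeMajorant hn ht) (fun i hi mk e => ?_) hi η
  rw [hmode]
  exact abs_modeCoeff_mul_le_modeMajorant n t mk
    (abs_iteratedDeriv_fiberMode_mul_iteratedDeriv_hopfRadialMode_le hn hi (Nat.zero_le 2) e r)

lemma hasSum_deriv_pKernel_time (hn : 1 ≤ n) (hJ : IsJacobi J) (ht : 0 < t) (r : ℝ)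
    (hη : sin η ≠ 0) :
    HasSum (fun mk => deriv (fun s => pTerm n J s r η mk) t)
      (deriv (fun s => pKernel n J s r η) t) := by
  simp only [pKernel, pTerm_eq hJ n _ r hη, mul_right_comm (modeCoeff n _)]
  refine hasSum_deriv_tsum_mul_exp (modeEigenvalue_nonneg n) (half_lt_self ht) ?_
  refine (summable_modeMajorant hn (half_pos ht)).of_nonneg_of_le (fun mk => ?_) fun mk => ?_
  · have := modeEigenvalue_nonneg n mk
    positivity
  · have heigen := modeEigenvalue_nonneg n mk
    have hcoeff := modeCoeff_nonneg n mk
    rw [abs_mul, abs_of_nonneg hcoeff, modeMajorant]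
    gcongr
    exact abs_iteratedDeriv_fiberMode_mul_iteratedDeriv_hopfRadialMode_le hn (Nat.zero_le 2)
      (Nat.zero_le 2) η r

lemma hasSum_subLaplacian_pTerm (hn : 1 ≤ n) (hJ : IsJacobi J) (ht : 0 < t) (r : ℝ)
    (hη : sin η ≠ 0) :
    HasSum (fun mk => subLaplacian n (fun ρ e => pTerm n J t ρ e mk) r η)
      (subLaplacian n (pKernel n J t) r η) := by
  have radial {j : ℕ} (hj : j ≤ 2) := hasSum_iteratedDeriv_pKernel_radial hn hJ ht r hη hj
  have fiber {i : ℕ} (hi : i ≤ 2) := hasSum_iteratedDeriv_pKernel_fiber hn hJ ht r hη hi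
  simp only [subLaplacian, ← iteratedDeriv_one]
  exact ((radial le_rfl).add ((radial one_le_two).mul_left _)).add
    (((fiber le_rfl).add ((fiber one_le_two).mul_left _)).mul_left _)

theorem deriv_pKernel_eq_subLaplacian (hn : 1 ≤ n) (hJ : IsJacobi J) (ht : 0 < t)
    (hsin : sin r ≠ 0) (hcos : cos r ≠ 0) (hη : sin η ≠ 0) :
    deriv (fun s => pKernel n J s r η) t = subLaplacian n (pKernel n J t) r η := by
  have htime := hasSum_deriv_pKernel_time hn hJ ht r hη
  simp only [deriv_pTerm_eq_subLaplacian hn hJ t hsin hcos hη] at htime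
  exact htime.unique (hasSum_subLaplacian_pTerm hn hJ ht r hη)

end HeatKernel

end

/-- absolute convergence of the double series defining the subelliptic heat
kernel `p_t(r,η)` and the subelliptic heat equation it satisfies. -/
theorem stmt_0 (n : ℕ) (hn : 1 ≤ n) (J : ℕ → ℕ → ℕ → ℝ → ℝ) (hJ : IsJacobi J) :
    (∀ t r η : ℝ, 0 < t → r ∈ Set.Ico 0 (π / 2) → η ∈ Set.Ioo 0 π →
      Summable (fun mk : ℕ × ℕ => |pTerm n J t r η mk|)) ∧
    (∀ t r η : ℝ, t ∈ Set.Ioi (0 : ℝ) → r ∈ Set.Ioo 0 (π / 2) → η ∈ Set.Ioo 0 π →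
      deriv (fun s => pKernel n J s r η) t =
        iteratedDeriv 2 (fun ρ => pKernel n J t ρ η) r +
          ((4 * (n : ℝ) - 1) * Real.cot r - 3 * Real.tan r) *
            deriv (fun ρ => pKernel n J t ρ η) r +
          Real.tan r ^ 2 *
            (iteratedDeriv 2 (fun e => pKernel n J t r e) η +
              2 * Real.cot η * deriv (fun e => pKernel n J t r e) η)) := by
  refine ⟨fun t r η ht _ hη => summable_abs_pTerm hn hJ ht r (sin_pos_of_mem_Ioo hη).ne',
    fun t r η ht hr hη => ?_⟩
  have hsin : sin r ≠ 0 := (sin_pos_of_mem_Ioo ⟨hr.1, by linarith [hr.2, pi_pos]⟩).ne'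
  have hcos : cos r ≠ 0 := (cos_pos_of_mem_Ioo ⟨by linarith [hr.1, pi_pos], hr.2⟩).ne'
  exact deriv_pKernel_eq_subLaplacian hn hJ ht hsin hcos (sin_pos_of_mem_Ioo hη).ne'
end

section
/- Let n ≥ 1 and m ≥ 0 be integers, let ψ : (0,∞) × (0, π/2) → ℝ be a smooth function, and define φ(t,r) = e^{−4nmt}·(cos r)^m·ψ(t,r). Then φ satisfies ∂φ/∂t = ∂²φ/∂r² + ((4n−1)·cot r − 3·tan r)·∂φ/∂r − m(m+2)·tan²r·φ on (0,∞) × (0, π/2) if and only if ψ satisfies ∂ψ/∂t = ∂²ψ/∂r² + ((4n−1)·cot r − (2m+3)·tan r)·∂ψ/∂r on (0,∞) × (0, π/2). -/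
open Real MeasureTheory Filter Topology Set

noncomputable section

/-!
By the product rule `L (w f) = w L f + 2 w' f' + f L w` for the second-order operator
`L f = f'' + ((2α + 1) cot - (2β + 1) tan) f'`, multiplication by `w = cos ^ μ` changes the drift by
`2 w' / w = -2μ tan`, that is, it shifts `β` to `β + μ`. Since
`L w = (μ (μ + 2β) tan² - 2μ (α + 1)) w`, the potential `μ (μ + 2β) tan²` cancels and the remaining
constant `-2μ (α + 1)` is absorbed by the factor `exp (-2μ (α + 1) t)`. The theorem is the case
`α = 2n - 1`, `β = 1`, `μ = m`.
-/

section

variable {𝕜 E F G 𝔸 : Type*} [NontriviallyNormedField 𝕜]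
  [NormedAddCommGroup E] [NormedSpace 𝕜 E] [NormedAddCommGroup F] [NormedSpace 𝕜 F]
  [NormedAddCommGroup G] [NormedSpace 𝕜 G] [NormedRing 𝔸] [NormedAlgebra 𝕜 𝔸]

theorem contDiffAt_curry_left {f : E → F → G} {x : E} {y : F} {k : WithTop ℕ∞}
    (hf : ContDiffAt 𝕜 k (fun p : E × F => f p.1 p.2) (x, y)) :
    ContDiffAt 𝕜 k (fun u => f u y) x :=
  hf.comp (f := fun u => (u, y)) x (contDiffAt_id.prodMk contDiffAt_const)

theorem contDiffAt_curry_right {f : E → F → G} {x : E} {y : F} {k : WithTop ℕ∞}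
    (hf : ContDiffAt 𝕜 k (fun p : E × F => f p.1 p.2) (x, y)) : ContDiffAt 𝕜 k (f x) y :=
  hf.comp (f := fun v => (x, v)) y (contDiffAt_const.prodMk contDiffAt_id)

theorem iteratedDeriv_two_mul {f g : 𝕜 → 𝔸} {x : 𝕜}
    (hf : ContDiffAt 𝕜 2 f x) (hg : ContDiffAt 𝕜 2 g x) :
    iteratedDeriv 2 (f * g) x =
      f x * iteratedDeriv 2 g x + 2 * deriv f x * deriv g x + iteratedDeriv 2 f x * g x := by
  simp [iteratedDeriv_mul hf hg, Finset.sum_range_succ]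

end

/-- The Jacobi operator `f'' + ((2α + 1) cot r - (2β + 1) tan r) f'` in the angular variable `r`,
evaluated at the point `r`. It has junk values where `f` is not twice differentiable or where
`sin r` or `cos r` vanishes. -/
def jacobiOp (α β : ℝ) (f : ℝ → ℝ) (r : ℝ) : ℝ :=
  iteratedDeriv 2 f r + ((2 * α + 1) * cot r - (2 * β + 1) * tan r) * deriv f r

section

variable {α β μ r : ℝ} {f g : ℝ → ℝ}

theorem jacobiOp_const_mul (c : ℝ) :
    jacobiOp α β (fun ρ => c * f ρ) r = c * jacobiOp α β f r := by
  simp only [jacobiOp, iteratedDeriv_const_mul_field, deriv_const_mul_field]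
  ring

theorem jacobiOp_mul (hf : ContDiffAt ℝ 2 f r) (hg : ContDiffAt ℝ 2 g r) :
    jacobiOp α β (f * g) r =
      f r * jacobiOp α β g r + 2 * deriv f r * deriv g r + jacobiOp α β f r * g r := by
  rw [jacobiOp, iteratedDeriv_two_mul hf hg,
    deriv_mul (hf.differentiableAt two_ne_zero) (hg.differentiableAt two_ne_zero)]
  simp only [jacobiOp]
  ring

theorem jacobiOp_add_right (δ : ℝ) :
    jacobiOp α (β + δ) f r = jacobiOp α β f r - 2 * δ * tan r * deriv f r := by
  simp only [jacobiOp]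
  ring

theorem hasDerivAt_cos_rpow (hr : cos r ≠ 0) :
    HasDerivAt (fun ρ => cos ρ ^ μ) (-(μ * tan r) * cos r ^ μ) r := by
  refine ((hasDerivAt_cos r).rpow_const (Or.inl hr)).congr_deriv ?_
  rw [rpow_sub_one hr, tan_eq_sin_div_cos]
  ring

theorem iteratedDeriv_two_cos_rpow (hr : cos r ≠ 0) :
    iteratedDeriv 2 (fun ρ => cos ρ ^ μ) r = (μ * (μ - 1) * tan r ^ 2 - μ) * cos r ^ μ := by
  have deriv_eq : deriv (fun ρ => cos ρ ^ μ) =ᶠ[𝓝 r] fun ρ => -(μ * tan ρ) * cos ρ ^ μ :=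
    (continuous_cos.continuousAt.eventually_ne hr).mono fun _ hρ => (hasDerivAt_cos_rpow hρ).deriv
  have hasDerivAt_deriv :=
    ((hasDerivAt_tan hr).const_mul μ).fun_neg.fun_mul (hasDerivAt_cos_rpow (μ := μ) hr)
  have sec_sq : 1 / cos r ^ 2 = 1 + tan r ^ 2 := by
    rw [← inv_one_add_tan_sq hr, one_div, inv_inv]
  rw [iteratedDeriv_succ, iteratedDeriv_one, deriv_eq.deriv_eq, hasDerivAt_deriv.deriv, sec_sq]
  ring

theorem jacobiOp_cos_rpow (hsin : sin r ≠ 0) (hcos : cos r ≠ 0) :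
    jacobiOp α β (fun ρ => cos ρ ^ μ) r =
      (μ * (μ + 2 * β) * tan r ^ 2 - 2 * μ * (α + 1)) * cos r ^ μ := by
  have cot_mul_tan : cot r * tan r = 1 := by
    rw [cot_eq_cos_div_sin, tan_eq_sin_div_cos]
    field_simp
  rw [jacobiOp, iteratedDeriv_two_cos_rpow hcos, (hasDerivAt_cos_rpow hcos).deriv]
  linear_combination (-(2 * α + 1) * μ * cos r ^ μ) * cot_mul_tan

theorem jacobiOp_cos_rpow_mul (hsin : sin r ≠ 0) (hcos : cos r ≠ 0) (hf : ContDiffAt ℝ 2 f r) :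
    jacobiOp α β (fun ρ => cos ρ ^ μ * f ρ) r =
      cos r ^ μ * (jacobiOp α (β + μ) f r +
        (μ * (μ + 2 * β) * tan r ^ 2 - 2 * μ * (α + 1)) * f r) := by
  have product_rule := jacobiOp_mul (α := α) (β := β)
    (contDiff_cos.contDiffAt.rpow_const_of_ne (p := μ) hcos) hf
  rw [jacobiOp_cos_rpow hsin hcos, (hasDerivAt_cos_rpow hcos).deriv] at product_rule
  rw [jacobiOp_add_right]
  exact product_rule.trans (by ring)

theorem deriv_exp_mul_mul (c : ℝ) {t : ℝ} (hf : DifferentiableAt ℝ f t) :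
    deriv (fun s => exp (c * s) * f s) t = exp (c * t) * (deriv f t + c * f t) := by
  have hasDerivAt_exp_mul : HasDerivAt (fun s => exp (c * s)) (exp (c * t) * c) t := by
    simpa using ((hasDerivAt_id t).const_mul c).exp
  rw [(hasDerivAt_exp_mul.fun_mul hf.hasDerivAt).deriv]
  ring

end

theorem deriv_sub_jacobiOp_exp_mul_cos_rpow_mul (α β μ : ℝ) {ψ : ℝ → ℝ → ℝ} {t r : ℝ}
    (hsin : sin r ≠ 0) (hcos : cos r ≠ 0) (hψt : DifferentiableAt ℝ (fun s => ψ s r) t)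
    (hψr : ContDiffAt ℝ 2 (ψ t) r) :
    deriv (fun s => exp (-(2 * μ * (α + 1)) * s) * (cos r ^ μ * ψ s r)) t -
        (jacobiOp α β (fun ρ => exp (-(2 * μ * (α + 1)) * t) * (cos ρ ^ μ * ψ t ρ)) r -
          μ * (μ + 2 * β) * tan r ^ 2 * (exp (-(2 * μ * (α + 1)) * t) * (cos r ^ μ * ψ t r))) =
      exp (-(2 * μ * (α + 1)) * t) * cos r ^ μ *
        (deriv (fun s => ψ s r) t - jacobiOp α (β + μ) (ψ t) r) := by
  rw [deriv_exp_mul_mul _ (hψt.const_mul _), deriv_const_mul _ hψt, jacobiOp_const_mul,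
    jacobiOp_cos_rpow_mul hsin hcos hψr]
  ring

theorem stmt_2_general (α β μ : ℝ) (T : Set ℝ) (ψ φ : ℝ → ℝ → ℝ)
    (hψt : ∀ t ∈ T, ∀ r ∈ Ioo 0 (π / 2), DifferentiableAt ℝ (fun s => ψ s r) t)
    (hψr : ∀ t ∈ T, ∀ r ∈ Ioo 0 (π / 2), ContDiffAt ℝ 2 (ψ t) r)
    (hφ : ∀ t r, φ t r = exp (-(2 * μ * (α + 1)) * t) * cos r ^ μ * ψ t r) :
    (∀ t ∈ T, ∀ r ∈ Ioo 0 (π / 2), deriv (fun s => φ s r) t =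
        jacobiOp α β (φ t) r - μ * (μ + 2 * β) * tan r ^ 2 * φ t r) ↔
      ∀ t ∈ T, ∀ r ∈ Ioo 0 (π / 2),
        deriv (fun s => ψ s r) t = jacobiOp α (β + μ) (ψ t) r := by
  refine forall₂_congr fun t ht => forall₂_congr fun r hr => ?_
  have hcos : 0 < cos r := cos_pos_of_mem_Ioo ⟨by linarith [hr.1, pi_pos], hr.2⟩
  have hsin : 0 < sin r := sin_pos_of_pos_of_lt_pi hr.1 (by linarith [hr.2, pi_pos])
  have weight_ne_zero : exp (-(2 * μ * (α + 1)) * t) * cos r ^ μ ≠ 0 := by positivity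
  simp only [hφ, funext (hφ t), mul_assoc (exp _)]
  rw [← sub_eq_zero, deriv_sub_jacobiOp_exp_mul_cos_rpow_mul α β μ hsin.ne' hcos.ne'
    (hψt t ht r hr) (hψr t ht r hr), mul_eq_zero_iff_left weight_ne_zero, sub_eq_zero]

/-- the change of unknown function `φ(t,r) = e^{-4nmt} (cos r)^m ψ(t,r)` turns the
radial subelliptic heat equation (with vertical eigenvalue `-m(m+2)`) into a Jacobi-type
equation. -/
theorem stmt_2 (n : ℕ) (hn : 1 ≤ n) (m : ℕ) (ψ : ℝ → ℝ → ℝ)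
    (hψ : ContDiffOn ℝ (⊤ : ℕ∞) (fun p : ℝ × ℝ => ψ p.1 p.2) (Set.Ioi 0 ×ˢ Set.Ioo 0 (π / 2)))
    (φ : ℝ → ℝ → ℝ)
    (hφ : ∀ t r : ℝ, φ t r = Real.exp (-(4 * n * m) * t) * Real.cos r ^ m * ψ t r) :
    (∀ t ∈ Set.Ioi (0 : ℝ), ∀ r ∈ Set.Ioo (0 : ℝ) (π / 2),
      deriv (fun s => φ s r) t =
        iteratedDeriv 2 (fun ρ => φ t ρ) r +
          ((4 * (n : ℝ) - 1) * Real.cot r - 3 * Real.tan r) * deriv (fun ρ => φ t ρ) r -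
          (m : ℝ) * (m + 2) * Real.tan r ^ 2 * φ t r) ↔
    (∀ t ∈ Set.Ioi (0 : ℝ), ∀ r ∈ Set.Ioo (0 : ℝ) (π / 2),
      deriv (fun s => ψ s r) t =
        iteratedDeriv 2 (fun ρ => ψ t ρ) r +
          ((4 * (n : ℝ) - 1) * Real.cot r - (2 * (m : ℝ) + 3) * Real.tan r) *
            deriv (fun ρ => ψ t ρ) r) := by
  have hψ_at (t) (ht : t ∈ Ioi 0) (r) (hr : r ∈ Ioo 0 (π / 2)) :
      ContDiffAt ℝ 2 (fun p : ℝ × ℝ => ψ p.1 p.2) (t, r) :=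
    (hψ.of_le (WithTop.coe_le_coe.2 le_top)).contDiffAt
      ((isOpen_Ioi.prod isOpen_Ioo).mem_nhds ⟨ht, hr⟩)
  have jacobi_iff := stmt_2_general (2 * n - 1) 1 m (Ioi 0) ψ φ
    (fun t ht r hr => (contDiffAt_curry_left (hψ_at t ht r hr)).differentiableAt two_ne_zero)
    (fun t ht r hr => contDiffAt_curry_right (hψ_at t ht r hr))
    (fun t r => by rw [hφ, rpow_natCast]; ring_nf)
  simp only [jacobiOp] at jacobi_iff
  convert jacobi_iff using 9 <;> ring

end
end

section
/- Let f : [0,∞) → ℝ be continuous with compact support, and for t > 0, η > 0 define u(t,η) = (e^{−t}/√(πt))·∫_0^∞ (sinh r·sinh(ηr/(2t))/sinh η)·e^{−(r²+η²)/(4t)}·f(r) dr. Then u satisfies the heat equation ∂u/∂t = ∂²u/∂η² + 2·coth η·∂u/∂η for all t > 0, η > 0, and for every η > 0, u(t,η) → f(η) as t → 0⁺. (That is, u(t,·) = e^{tΔ̃_{SL(2)}}f for the operator Δ̃_{SL(2)} = d²/dη² + 2 coth η d/dη.) -/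
open Real MeasureTheory Filter Topology Set

noncomputable section

/-!
For `v = h · w` one has `h (w'' + 2 (h' / h) w') = v'' - (h'' / h) v`. With `h = sinh` the operator
`d²/dη² + 2 coth η d/dη` is therefore conjugate to `d²/dη² - 1`, and its heat semigroup is
`e^{-t} (sinh η)⁻¹ e^{t d²/dη²} (sinh · f)`. Extending `sinh · f` to an odd function on the line and
folding the Euclidean heat kernel onto the half-line produces the kernel `sinh (η r / (2 t))`.
-/

section ParametricIntegral

theorem hasDerivAt_integral_mul_of_norm_le {α 𝕜 : Type*} [MeasurableSpace α] {μ : Measure α}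
    [RCLike 𝕜] {g : α → 𝕜} {F F' : 𝕜 → α → 𝕜} {a : 𝕜} {s : Set 𝕜} {B C : ℝ}
    (hs : s ∈ 𝓝 a) (hg : Integrable g μ)
    (hF_meas : ∀ x, AEStronglyMeasurable (F x) μ) (hF'_meas : AEStronglyMeasurable (F' a) μ)
    (hF_le : ∀ r, ‖F a r‖ ≤ B) (hF'_le : ∀ x ∈ s, ∀ r, ‖F' x r‖ ≤ C)
    (hF : ∀ x ∈ s, ∀ r, HasDerivAt (fun y => F y r) (F' x r) x) :
    HasDerivAt (fun x => ∫ r, g r * F x r ∂μ) (∫ r, g r * F' a r ∂μ) a :=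
  (hasDerivAt_integral_of_dominated_loc_of_deriv_le (bound := fun r => ‖g r‖ * C) hs
    (.of_forall fun x => hg.aestronglyMeasurable.mul (hF_meas x))
    (hg.mul_bdd (hF_meas a) (.of_forall hF_le))
    (hg.aestronglyMeasurable.mul hF'_meas)
    (.of_forall fun r x hx => by
      rw [norm_mul]
      gcongr
      exact hF'_le x hx r)
    (hg.norm.mul_const C)
    (.of_forall fun r x hx => (hF x hx r).const_mul (g r))).2

theorem hasDerivAt_integral_mul_comp_sub {g k k' : ℝ → ℝ} {B C : ℝ} (hg : Integrable g)
    (hk : ∀ z, HasDerivAt k (k' z) z) (hk' : Continuous k')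
    (hk_le : ∀ z, |k z| ≤ B) (hk'_le : ∀ z, |k' z| ≤ C) (x : ℝ) :
    HasDerivAt (fun y => ∫ r, g r * k (y - r)) (∫ r, g r * k' (x - r)) x := by
  have hk_cont : Continuous k := continuous_iff_continuousAt.2 fun z => (hk z).continuousAt
  refine hasDerivAt_integral_mul_of_norm_le (F := fun y r => k (y - r))
    (F' := fun y r => k' (y - r)) univ_mem hg (fun y => ?_) ?_ (fun r => hk_le _)
    (fun y _ r => hk'_le _) (fun y _ r => (hk (y - r)).comp_sub_const y r)
  · exact (hk_cont.comp (by fun_prop)).aestronglyMeasurable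
  · exact (hk'.comp (by fun_prop)).aestronglyMeasurable

end ParametricIntegral

section Reflection

theorem integral_eq_integral_Ioi_add_comp_neg {E : Type*} [NormedAddCommGroup E]
    [NormedSpace ℝ E] {F : ℝ → E} (hF : Integrable F) :
    ∫ r, F r = ∫ r in Ioi (0 : ℝ), (F r + F (-r)) := by
  rw [integral_add hF.integrableOn hF.comp_neg.integrableOn, integral_comp_neg_Ioi, neg_zero,
    add_comm, intervalIntegral.integral_Iic_add_Ioi hF.integrableOn hF.integrableOn]

theorem integrable_of_odd_of_integrableOn_Ioi {E : Type*} [NormedAddCommGroup E] {g : ℝ → E}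
    (hodd : g.Odd) (hg : IntegrableOn g (Ioi 0)) : Integrable g := by
  have hg_neg : IntegrableOn g (Iio 0) := by
    have hcomp : IntegrableOn (fun r => g (-r)) (Iio 0) :=
      IntegrableOn.comp_neg_Iio (by rwa [neg_zero])
    simpa [hodd _] using hcomp.neg
  rw [← integrableOn_univ, ← Iic_union_Ioi (a := (0 : ℝ))]
  exact ((integrableOn_Iic_iff_integrableOn_Iio (by simp)).2 hg_neg).union hg

end Reflection

section DoobTransform

variable {𝕜 : Type*} [NontriviallyNormedField 𝕜] {v v' h h' : 𝕜 → 𝕜} {v'' h'' x : 𝕜}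

theorem hasDerivAt_div_sub_mul_div {vx' hx' : 𝕜} (hv : HasDerivAt v vx' x) (hh : HasDerivAt h hx' x)
    (hx : h x ≠ 0) :
    HasDerivAt (fun y => v y / h y) ((vx' - hx' * (v x / h x)) / h x) x := by
  refine (hv.div hh hx).congr_deriv ?_
  field_simp

theorem iteratedDeriv_two_div_add_two_mul_deriv_div
    (hv : ∀ᶠ y in 𝓝 x, HasDerivAt v (v' y) y) (hv' : HasDerivAt v' v'' x)
    (hh : ∀ᶠ y in 𝓝 x, HasDerivAt h (h' y) y) (hh' : HasDerivAt h' h'' x) (hx : h x ≠ 0) :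
    iteratedDeriv 2 (fun y => v y / h y) x + 2 * (h' x / h x) * deriv (fun y => v y / h y) x =
      (v'' - h'' * (v x / h x)) / h x := by
  have hh_x := hh.self_of_nhds
  have hw := hasDerivAt_div_sub_mul_div hv.self_of_nhds hh_x hx
  have hderiv : deriv (fun y => v y / h y) =ᶠ[𝓝 x] fun y => (v' y - h' y * (v y / h y)) / h y := by
    filter_upwards [hv, hh, hh_x.continuousAt.eventually_ne hx] with y hvy hhy hy
    exact (hasDerivAt_div_sub_mul_div hvy hhy hy).deriv
  have hw' := hasDerivAt_div_sub_mul_div (hv'.sub (hh'.mul hw)) hh_x hx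
  rw [iteratedDeriv_succ, iteratedDeriv_one, (hw'.congr_of_eventuallyEq hderiv).deriv, hw.deriv]
  simp only [Pi.sub_apply, Pi.mul_apply]
  ring

end DoobTransform

section HeatKernel

/-- The Euclidean heat kernel on the line: the kernel of `e^{t d²/dz²}` at the displacement `z`.
For `t ≤ 0` its value is `0`, because the square root then vanishes. -/
def heatKernel (t z : ℝ) : ℝ := (2 * √(π * t))⁻¹ * exp (-z ^ 2 / (4 * t))

/-- The closed form of `∂/∂z` of the heat kernel. -/
def heatKernelDeriv (t z : ℝ) : ℝ := -(z / (2 * t)) * heatKernel t z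

/-- The closed form of `∂²/∂z²` of the heat kernel, which is also that of its `∂/∂t`. -/
def heatKernelDerivTwo (t z : ℝ) : ℝ := (z ^ 2 / (4 * t) / t - 1 / (2 * t)) * heatKernel t z

variable {t : ℝ}

theorem continuous_heatKernel (t : ℝ) : Continuous (heatKernel t) := by
  unfold heatKernel
  fun_prop

theorem continuous_heatKernelDeriv (t : ℝ) : Continuous (heatKernelDeriv t) := by
  have := continuous_heatKernel t
  unfold heatKernelDeriv
  fun_prop

theorem continuous_heatKernelDerivTwo (t : ℝ) : Continuous (heatKernelDerivTwo t) := by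
  have := continuous_heatKernel t
  unfold heatKernelDerivTwo
  fun_prop

theorem hasDerivAt_heatKernel (t z : ℝ) :
    HasDerivAt (heatKernel t) (heatKernelDeriv t z) z := by
  have hexponent : HasDerivAt (fun y : ℝ => -y ^ 2 / (4 * t)) (-(2 * z) / (4 * t)) z := by
    simpa using ((hasDerivAt_pow 2 z).neg.div_const (4 * t))
  refine (hexponent.exp.const_mul (2 * √(π * t))⁻¹).congr_deriv ?_
  unfold heatKernelDeriv heatKernel
  ring

theorem hasDerivAt_heatKernelDeriv (t z : ℝ) :
    HasDerivAt (heatKernelDeriv t) (heatKernelDerivTwo t z) z := by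
  have hfactor : HasDerivAt (fun y : ℝ => -(y / (2 * t))) (-(1 / (2 * t))) z :=
    ((hasDerivAt_id z).div_const (2 * t)).neg
  refine (hfactor.mul (hasDerivAt_heatKernel t z)).congr_deriv ?_
  unfold heatKernelDerivTwo heatKernelDeriv
  ring

theorem hasDerivAt_heatKernel_time (ht : 0 < t) (z : ℝ) :
    HasDerivAt (fun s => heatKernel s z) (heatKernelDerivTwo t z) t := by
  have hsqrt_ne : 2 * √(π * t) ≠ 0 := by positivity
  have hsqrt : HasDerivAt (fun s => 2 * √(π * s)) (√(π * t) / t) t := by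
    refine ((((hasDerivAt_id t).const_mul π).sqrt
      (mul_pos pi_pos ht).ne').const_mul 2).congr_deriv ?_
    have hsq : √(π * t) ^ 2 = π * t := sq_sqrt (by positivity)
    simp only [id_eq]
    field_simp
    exact hsq.symm
  have hexponent : HasDerivAt (fun s => -z ^ 2 / (4 * s)) (z ^ 2 / (4 * t) / t) t := by
    refine ((hasDerivAt_const t (-z ^ 2)).div ((hasDerivAt_id t).const_mul 4)
      (mul_pos four_pos ht).ne').congr_deriv ?_
    simp only [id_eq]
    field_simp
    ring
  refine ((hsqrt.inv hsqrt_ne).mul hexponent.exp).congr_deriv ?_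
  simp only [Pi.inv_apply]
  unfold heatKernelDerivTwo heatKernel
  field_simp
  ring

theorem heatKernel_zero_right (t : ℝ) : heatKernel t 0 = (2 * √(π * t))⁻¹ := by
  simp [heatKernel]

theorem heatKernel_nonneg (t z : ℝ) : 0 ≤ heatKernel t z := by
  unfold heatKernel
  positivity

theorem heatKernel_le_heatKernel_zero (ht : 0 ≤ t) (z : ℝ) : heatKernel t z ≤ heatKernel t 0 := by
  rw [heatKernel_zero_right]
  exact mul_le_of_le_one_right (by positivity) <| exp_le_one_iff.2 <|
    div_nonpos_of_nonpos_of_nonneg (neg_nonpos.2 (sq_nonneg z)) (by positivity)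

theorem abs_heatKernel_le (ht : 0 ≤ t) (z : ℝ) : |heatKernel t z| ≤ heatKernel t 0 := by
  rw [abs_of_nonneg (heatKernel_nonneg t z)]
  exact heatKernel_le_heatKernel_zero ht z

theorem sq_div_mul_heatKernel_le (t z : ℝ) :
    z ^ 2 / (4 * t) * heatKernel t z ≤ heatKernel t 0 := by
  have hexp : z ^ 2 / (4 * t) * exp (-(z ^ 2 / (4 * t))) ≤ 1 :=
    (mul_exp_neg_le_exp_neg_one _).trans (exp_le_one_iff.2 (by norm_num))
  calc z ^ 2 / (4 * t) * heatKernel t z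
      = (2 * √(π * t))⁻¹ * (z ^ 2 / (4 * t) * exp (-(z ^ 2 / (4 * t)))) := by
        unfold heatKernel
        rw [neg_div]
        ring
    _ ≤ (2 * √(π * t))⁻¹ * 1 := by gcongr
    _ = heatKernel t 0 := by rw [mul_one, heatKernel_zero_right]

theorem abs_heatKernelDeriv_le (ht : 0 < t) (z : ℝ) :
    |heatKernelDeriv t z| ≤ (1 + 1 / t) * heatKernel t 0 := by
  have hlinear : |z / (2 * t)| ≤ 1 + z ^ 2 / (4 * t) / t := by
    have hsq : |z / (2 * t)| ^ 2 = z ^ 2 / (4 * t) / t := by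
      rw [sq_abs]
      ring
    nlinarith [sq_nonneg (|z / (2 * t)| - 1)]
  calc |heatKernelDeriv t z|
      = |z / (2 * t)| * heatKernel t z := by
        rw [heatKernelDeriv, abs_mul, abs_neg, abs_of_nonneg (heatKernel_nonneg t z)]
    _ ≤ (1 + z ^ 2 / (4 * t) / t) * heatKernel t z :=
        mul_le_mul_of_nonneg_right hlinear (heatKernel_nonneg t z)
    _ = heatKernel t z + 1 / t * (z ^ 2 / (4 * t) * heatKernel t z) := by ring
    _ ≤ heatKernel t 0 + 1 / t * heatKernel t 0 := by
        gcongr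
        · exact heatKernel_le_heatKernel_zero ht.le z
        · exact sq_div_mul_heatKernel_le t z
    _ = (1 + 1 / t) * heatKernel t 0 := by ring

theorem abs_heatKernelDerivTwo_le (ht : 0 < t) (z : ℝ) :
    |heatKernelDerivTwo t z| ≤ 3 / (2 * t) * heatKernel t 0 := by
  calc |heatKernelDerivTwo t z|
      = |z ^ 2 / (4 * t) / t - 1 / (2 * t)| * heatKernel t z := by
        rw [heatKernelDerivTwo, abs_mul, abs_of_nonneg (heatKernel_nonneg t z)]
    _ ≤ (z ^ 2 / (4 * t) / t + 1 / (2 * t)) * heatKernel t z := by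
        refine mul_le_mul_of_nonneg_right ?_ (heatKernel_nonneg t z)
        refine (abs_sub _ _).trans_eq ?_
        rw [abs_of_nonneg (by positivity), abs_of_nonneg (by positivity)]
    _ = 1 / t * (z ^ 2 / (4 * t) * heatKernel t z) + 1 / (2 * t) * heatKernel t z := by ring
    _ ≤ 1 / t * heatKernel t 0 + 1 / (2 * t) * heatKernel t 0 := by
        gcongr
        · exact sq_div_mul_heatKernel_le t z
        · exact heatKernel_le_heatKernel_zero ht.le z
    _ = 3 / (2 * t) * heatKernel t 0 := by
        field_simp
        ring

theorem heatKernel_eq_scaling (ht : 0 < t) (z : ℝ) :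
    heatKernel t z = (√t)⁻¹ * heatKernel 1 ((√t)⁻¹ * z) := by
  have hexponent : -((√t)⁻¹ * z) ^ 2 / (4 * 1) = -z ^ 2 / (4 * t) := by
    rw [mul_pow, inv_pow, sq_sqrt ht.le]
    field_simp
  rw [heatKernel, heatKernel, hexponent, sqrt_mul pi_pos.le, sqrt_mul pi_pos.le, sqrt_one]
  ring

theorem integral_heatKernel_one : ∫ z, heatKernel 1 z = 1 := by
  have hkernel : heatKernel 1 = ProbabilityTheory.gaussianPDFReal 0 2 := by
    ext z
    have hsqrt : √(2 * π * 2) = 2 * √π := by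
      rw [show 2 * π * 2 = 2 ^ 2 * π by ring, sqrt_mul (by norm_num), sqrt_sq (by norm_num)]
    norm_num [heatKernel, ProbabilityTheory.gaussianPDFReal, hsqrt]
  rw [hkernel, ProbabilityTheory.integral_gaussianPDFReal_eq_one 0 two_ne_zero]

theorem tendsto_norm_mul_heatKernel_one_cobounded :
    Tendsto (fun z => ‖z‖ * heatKernel 1 z) (Bornology.cobounded ℝ) (𝓝 0) := by
  have hdecay := (tendsto_rpow_abs_mul_exp_neg_mul_sq_cocompact
    (show (0 : ℝ) < 1 / 4 by norm_num) 1).const_mul (2 * √(π * 1))⁻¹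
  rw [mul_zero, ← Metric.cobounded_eq_cocompact] at hdecay
  refine hdecay.congr fun z => ?_
  rw [rpow_one, heatKernel, norm_eq_abs, show -(1 / 4) * z ^ 2 = -z ^ 2 / (4 * 1) by ring]
  ring

theorem heatKernel_sub_sub_heatKernel_add (t x r : ℝ) :
    heatKernel t (x - r) - heatKernel t (x + r) =
      (√(π * t))⁻¹ * (sinh (x * r / (2 * t)) * exp (-(r ^ 2 + x ^ 2) / (4 * t))) := by
  have hsub : -(x - r) ^ 2 / (4 * t) = x * r / (2 * t) + -(r ^ 2 + x ^ 2) / (4 * t) := by ring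
  have hadd : -(x + r) ^ 2 / (4 * t) = -(x * r / (2 * t)) + -(r ^ 2 + x ^ 2) / (4 * t) := by ring
  rw [heatKernel, heatKernel, hsub, hadd, exp_add, exp_add, sinh_eq]
  ring

end HeatKernel

section HeatEvolution

/-- The Euclidean heat evolution `e^{t d²/dx²} g` on the line, as a convolution with the
heat kernel. -/
def heatEvolution (g : ℝ → ℝ) (t x : ℝ) : ℝ := ∫ r, g r * heatKernel t (x - r)

variable {g : ℝ → ℝ} {t x : ℝ}

theorem hasDerivAt_heatEvolution (hg : Integrable g) (ht : 0 < t) (x : ℝ) :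
    HasDerivAt (heatEvolution g t) (∫ r, g r * heatKernelDeriv t (x - r)) x :=
  hasDerivAt_integral_mul_comp_sub hg (hasDerivAt_heatKernel t) (continuous_heatKernelDeriv t)
    (abs_heatKernel_le ht.le) (abs_heatKernelDeriv_le ht) x

theorem hasDerivAt_integral_mul_heatKernelDeriv (hg : Integrable g) (ht : 0 < t) (x : ℝ) :
    HasDerivAt (fun y => ∫ r, g r * heatKernelDeriv t (y - r))
      (∫ r, g r * heatKernelDerivTwo t (x - r)) x :=
  hasDerivAt_integral_mul_comp_sub hg (hasDerivAt_heatKernelDeriv t)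
    (continuous_heatKernelDerivTwo t) (abs_heatKernelDeriv_le ht) (abs_heatKernelDerivTwo_le ht) x

theorem hasDerivAt_heatEvolution_time (hg : Integrable g) (ht : 0 < t) (x : ℝ) :
    HasDerivAt (fun s => heatEvolution g s x) (∫ r, g r * heatKernelDerivTwo t (x - r)) t := by
  refine hasDerivAt_integral_mul_of_norm_le (F := fun s r => heatKernel s (x - r))
    (F' := fun s r => heatKernelDerivTwo s (x - r)) (B := heatKernel t 0)
    (C := 3 / (2 * (t / 2)) * heatKernel (t / 2) 0) (Ioi_mem_nhds (half_lt_self ht)) hg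
    (fun s => ?_) ?_ (fun r => abs_heatKernel_le ht.le _) (fun s hs r => ?_) (fun s hs r => ?_)
  · exact ((continuous_heatKernel s).comp (by fun_prop)).aestronglyMeasurable
  · exact ((continuous_heatKernelDerivTwo t).comp (by fun_prop)).aestronglyMeasurable
  · have hts : t / 2 ≤ s := le_of_lt hs
    refine (abs_heatKernelDerivTwo_le ((half_pos ht).trans hs) _).trans ?_
    simp only [heatKernel_zero_right]
    gcongr
  · exact hasDerivAt_heatKernel_time ((half_pos ht).trans hs) _

theorem tendsto_heatEvolution (hg : Integrable g) (hgx : ContinuousAt g x) :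
    Tendsto (fun t => heatEvolution g t x) (𝓝[>] 0) (𝓝 (g x)) := by
  have hscale : Tendsto (fun t : ℝ => (√t)⁻¹) (𝓝[>] 0) atTop := by
    refine tendsto_inv_nhdsGT_zero.comp (tendsto_nhdsWithin_iff.2 ⟨?_, ?_⟩)
    · simpa using (continuous_sqrt.tendsto 0).mono_left nhdsWithin_le_nhds
    · filter_upwards [self_mem_nhdsWithin] with t ht using sqrt_pos.2 ht
  have hpeak := tendsto_integral_comp_smul_smul_of_integrable' (heatKernel_nonneg 1)
    integral_heatKernel_one (by simpa using tendsto_norm_mul_heatKernel_one_cobounded) hg hgx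
  refine (hpeak.comp hscale).congr' ?_
  filter_upwards [self_mem_nhdsWithin] with t ht
  refine integral_congr_ae (.of_forall fun r => ?_)
  simp only [Module.finrank_self, pow_one, smul_eq_mul]
  rw [← heatKernel_eq_scaling ht, mul_comm]

theorem heatEvolution_of_odd (hodd : g.Odd) (hg : Integrable g) (ht : 0 < t) (x : ℝ) :
    heatEvolution g t x =
      ∫ r in Ioi (0 : ℝ), g r * (heatKernel t (x - r) - heatKernel t (x + r)) := by
  have hint : Integrable fun r => g r * heatKernel t (x - r) :=
    hg.mul_bdd ((continuous_heatKernel t).comp (by fun_prop)).aestronglyMeasurable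
      (.of_forall fun r => abs_heatKernel_le ht.le _)
  rw [heatEvolution, integral_eq_integral_Ioi_add_comp_neg hint]
  refine integral_congr_ae (.of_forall fun r => ?_)
  simp only [hodd r, sub_neg_eq_add]
  ring

end HeatEvolution

section SLTwo

/-- The odd function on the line that agrees with `sinh r * f r` for `0 ≤ r`. -/
def oddSinhMul (f : ℝ → ℝ) (r : ℝ) : ℝ := sinh r * f |r|

/-- The integral formula for the heat evolution `e^{tΔ̃} f` of the radial part
`Δ̃ = d²/dη² + 2 coth η d/dη` of the Laplacian of `SL(2)`. -/
def slTwoHeatEvolution (f : ℝ → ℝ) (t η : ℝ) : ℝ :=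
  (exp (-t) / √(π * t)) * ∫ r in Ioi (0 : ℝ),
    (sinh r * sinh (η * r / (2 * t)) / sinh η) * exp (-(r ^ 2 + η ^ 2) / (4 * t)) * f r

variable {f : ℝ → ℝ} {t η : ℝ}

theorem oddSinhMul_of_pos {r : ℝ} (hr : 0 < r) : oddSinhMul f r = sinh r * f r := by
  rw [oddSinhMul, abs_of_pos hr]

theorem odd_oddSinhMul (f : ℝ → ℝ) : (oddSinhMul f).Odd := fun r => by
  simp [oddSinhMul]

theorem integrable_oddSinhMul (hf : IntegrableOn (fun r => sinh r * f r) (Ioi 0)) :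
    Integrable (oddSinhMul f) :=
  integrable_of_odd_of_integrableOn_Ioi (odd_oddSinhMul f) <|
    hf.congr_fun (fun _ hr => (oddSinhMul_of_pos hr).symm) measurableSet_Ioi

theorem slTwoHeatEvolution_eq (hf : IntegrableOn (fun r => sinh r * f r) (Ioi 0)) (ht : 0 < t)
    (η : ℝ) :
    slTwoHeatEvolution f t η = exp (-t) * (heatEvolution (oddSinhMul f) t η / sinh η) := by
  rw [heatEvolution_of_odd (odd_oddSinhMul f) (integrable_oddSinhMul hf) ht, slTwoHeatEvolution,
    div_eq_mul_inv, mul_assoc, ← integral_const_mul, ← integral_div]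
  congr 1
  refine setIntegral_congr_fun measurableSet_Ioi fun r hr => ?_
  simp only [oddSinhMul_of_pos hr, heatKernel_sub_sub_heatKernel_add]
  ring

theorem hasDerivAt_slTwoHeatEvolution (hf : IntegrableOn (fun r => sinh r * f r) (Ioi 0))
    (ht : 0 < t) (hη : η ≠ 0) :
    HasDerivAt (fun s => slTwoHeatEvolution f s η)
      (iteratedDeriv 2 (slTwoHeatEvolution f t) η +
        2 * (cosh η / sinh η) * deriv (slTwoHeatEvolution f t) η) t := by
  have hg := integrable_oddSinhMul hf
  set v := heatEvolution (oddSinhMul f)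
  set v'' := ∫ r, oddSinhMul f r * heatKernelDerivTwo t (η - r)
  have hsinh : sinh η ≠ 0 := sinh_ne_zero.2 hη
  have hspace := iteratedDeriv_two_div_add_two_mul_deriv_div
    (.of_forall (hasDerivAt_heatEvolution hg ht)) (hasDerivAt_integral_mul_heatKernelDeriv hg ht η)
    (.of_forall hasDerivAt_sinh) (hasDerivAt_cosh η) hsinh
  rw [mul_div_cancel₀ _ hsinh] at hspace
  have htime : HasDerivAt (fun s => exp (-s) * (v s η / sinh η))
      (exp (-t) * ((v'' - v t η) / sinh η)) t := by
    refine ((hasDerivAt_neg t).exp.mul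
      ((hasDerivAt_heatEvolution_time hg ht η).div_const (sinh η))).congr_deriv ?_
    ring
  have hu : slTwoHeatEvolution f t = fun x => exp (-t) * (v t x / sinh x) :=
    funext (slTwoHeatEvolution_eq hf ht)
  refine (htime.congr_of_eventuallyEq ?_).congr_deriv ?_
  · filter_upwards [lt_mem_nhds ht] with s hs using slTwoHeatEvolution_eq hf hs η
  · rw [hu, iteratedDeriv_const_mul_field, deriv_const_mul_field]
    linear_combination -exp (-t) * hspace

theorem tendsto_slTwoHeatEvolution (hf : IntegrableOn (fun r => sinh r * f r) (Ioi 0))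
    (hη : 0 < η) (hfη : ContinuousAt f η) :
    Tendsto (fun t => slTwoHeatEvolution f t η) (𝓝[>] 0) (𝓝 (f η)) := by
  have hg_cont : ContinuousAt (oddSinhMul f) η :=
    (continuous_sinh.continuousAt.mul hfη).congr <| by
      filter_upwards [lt_mem_nhds hη] with r hr using (oddSinhMul_of_pos hr).symm
  have hexp : Tendsto (fun t : ℝ => exp (-t)) (𝓝[>] 0) (𝓝 1) := by
    have hcont : Continuous fun t : ℝ => exp (-t) := by fun_prop
    simpa using (hcont.tendsto 0).mono_left nhdsWithin_le_nhds
  have hlim := hexp.mul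
    ((tendsto_heatEvolution (integrable_oddSinhMul hf) hg_cont).div_const (sinh η))
  rw [oddSinhMul_of_pos hη, mul_div_cancel_left₀ _ (sinh_pos_iff.2 hη).ne', one_mul] at hlim
  refine hlim.congr' ?_
  filter_upwards [self_mem_nhdsWithin] with t ht using (slTwoHeatEvolution_eq hf ht η).symm

end SLTwo

theorem stmt_4_general (f : ℝ → ℝ) (hf : IntegrableOn (fun r => sinh r * f r) (Ioi 0))
    (u : ℝ → ℝ → ℝ)
    (hu : ∀ t η : ℝ, u t η =
      (Real.exp (-t) / Real.sqrt (π * t)) *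
        ∫ r in Set.Ioi (0 : ℝ),
          (Real.sinh r * Real.sinh (η * r / (2 * t)) / Real.sinh η) *
            Real.exp (-(r ^ 2 + η ^ 2) / (4 * t)) * f r) :
    (∀ t η : ℝ, 0 < t → 0 < η →
      HasDerivAt (fun s => u s η)
        (iteratedDeriv 2 (fun e => u t e) η +
          2 * (Real.cosh η / Real.sinh η) * deriv (fun e => u t e) η) t) ∧
    (∀ η : ℝ, 0 < η → ContinuousAt f η →
      Filter.Tendsto (fun t => u t η) (𝓝[>] 0) (𝓝 (f η))) := by
  obtain rfl : u = slTwoHeatEvolution f := funext₂ hu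
  exact ⟨fun t η ht hη => hasDerivAt_slTwoHeatEvolution hf ht hη.ne',
    fun η hη hfη => tendsto_slTwoHeatEvolution hf hη hfη⟩

/-- the integral formula for the heat semigroup of the operator
`d²/dη² + 2 coth η d/dη` (the radial part of the Laplacian on `SL(2)`): it solves the
associated heat equation and converges to the initial data as `t → 0⁺`. -/
theorem stmt_4 (f : ℝ → ℝ) (hf : Continuous f) (hf' : HasCompactSupport f)
    (u : ℝ → ℝ → ℝ)
    (hu : ∀ t η : ℝ, u t η =
      (Real.exp (-t) / Real.sqrt (π * t)) *
        ∫ r in Set.Ioi (0 : ℝ),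
          (Real.sinh r * Real.sinh (η * r / (2 * t)) / Real.sinh η) *
            Real.exp (-(r ^ 2 + η ^ 2) / (4 * t)) * f r) :
    (∀ t η : ℝ, 0 < t → 0 < η →
      deriv (fun s => u s η) t =
        iteratedDeriv 2 (fun e => u t e) η +
          2 * (Real.cosh η / Real.sinh η) * deriv (fun e => u t e) η) ∧
    (∀ η : ℝ, 0 < η → Filter.Tendsto (fun t => u t η) (𝓝[>] 0) (𝓝 (f η))) := by
  have hsinh_f : Integrable fun r => sinh r * f r :=
    (continuous_sinh.mul hf).integrable_of_hasCompactSupport hf'.mul_left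
  obtain ⟨hheat, hlim⟩ := stmt_4_general f hsinh_f.integrableOn u hu
  exact ⟨fun t η ht hη => (hheat t η ht hη).deriv, fun η hη => hlim η hη hf.continuousAt⟩

end
end

section
/- Let f : [0,∞) → ℝ be continuous with compact support. Then for every t > 0 and every x ∈ ℝ³ with x ≠ 0, (1/(4πt)^{3/2})·∫_{ℝ³} e^{−‖y−x‖²/(4t)}·f(‖y‖) dy = (1/√(πt))·∫_0^∞ (r/‖x‖)·sinh(‖x‖·r/(2t))·e^{−(r²+‖x‖²)/(4t)}·f(r) dr. -/
open Real MeasureTheory Filter Topology Set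

noncomputable section

/-!
In polar coordinates the heat integral becomes an integral over `r > 0` of `r ^ 2 * f r` times the
integral of `y ↦ exp (-‖y - x‖ ^ 2 / (4 * t))` over directions `y = r • ω`. Since
`‖r • ω - x‖ ^ 2 = r ^ 2 + ‖x‖ ^ 2 - 2 * r * ⟪x, ω⟫`, only the integral of `ω ↦ exp ⟪v, ω⟫` over the
unit sphere is needed. The integrand depends on `ω` only through its angle `θ` with `v`, whose
distribution has density proportional to `sin θ` in dimension three, so that the integral is
elementary: `2 * π * ∫ θ in 0..π, sin θ * exp (‖v‖ * cos θ) = 4 * π * sinh ‖v‖ / ‖v‖`.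
-/

open scoped ENNReal InnerProductSpace

open Metric Module

lemma lintegral_volumeIoiPow (n : ℕ) (g : ℝ → ℝ≥0∞) :
    ∫⁻ r : Ioi (0 : ℝ), g r ∂.volumeIoiPow n =
      ∫⁻ r in Ioi (0 : ℝ), ENNReal.ofReal (r ^ n) * g r := by
  rw [Measure.volumeIoiPow, lintegral_withDensity_eq_lintegral_mul_non_measurable _ (by fun_prop)
    (.of_forall fun _ ↦ ENNReal.ofReal_lt_top)]
  exact lintegral_subtype_comap measurableSet_Ioi fun r ↦ ENNReal.ofReal (r ^ n) * g r

lemma integral_volumeIoiPow {F : Type*} [NormedAddCommGroup F] [NormedSpace ℝ F]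
    (n : ℕ) (g : ℝ → F) :
    ∫ r : Ioi (0 : ℝ), g r ∂.volumeIoiPow n = ∫ r in Ioi (0 : ℝ), r ^ n • g r := by
  simp only [Measure.volumeIoiPow, ENNReal.ofReal]
  rw [integral_withDensity_eq_integral_smul (by fun_prop),
    integral_subtype_comap measurableSet_Ioi fun r ↦ (r ^ n).toNNReal • g r]
  refine setIntegral_congr_fun measurableSet_Ioi fun r (hr : 0 < r) ↦ ?_
  rw [NNReal.smul_def, Real.coe_toNNReal _ (by positivity)]

section PolarCoordinates

variable {E : Type*} [NormedAddCommGroup E] [NormedSpace ℝ E] [FiniteDimensional ℝ E]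
  [Nontrivial E] [MeasurableSpace E] [BorelSpace E] (μ : Measure E) [μ.IsAddHaarMeasure]

lemma measurePreserving_smul_sphere :
    MeasurePreserving (fun p : sphere (0 : E) 1 × Ioi (0 : ℝ) ↦ (p.2 : ℝ) • (p.1 : E))
      (μ.toSphere.prod (.volumeIoiPow (finrank ℝ E - 1))) μ := by
  have hcoe := measurePreserving_subtype_coe (μa := μ) (measurableSet_singleton (0 : E)).compl
  have hsymm := MeasurePreserving.symm (homeomorphUnitSphereProd E).toMeasurableEquiv
    μ.measurePreserving_homeomorphUnitSphereProd
  rw [restrict_compl_singleton] at hcoe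
  exact hcoe.comp hsymm

lemma lintegral_eq_lintegral_Ioi_toSphere {f : E → ℝ≥0∞} (hf : Measurable f) :
    ∫⁻ x, f x ∂μ = ∫⁻ r in Ioi (0 : ℝ), ENNReal.ofReal (r ^ (finrank ℝ E - 1)) *
      ∫⁻ ω : sphere (0 : E) 1, f (r • ω) ∂μ.toSphere := by
  rw [← (measurePreserving_smul_sphere μ).lintegral_comp hf,
    lintegral_prod_symm _ (by fun_prop)]
  exact lintegral_volumeIoiPow _ fun r ↦ ∫⁻ ω : sphere (0 : E) 1, f (r • ω) ∂μ.toSphere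

lemma integral_eq_integral_Ioi_toSphere {F : Type*} [NormedAddCommGroup F] [NormedSpace ℝ F]
    {f : E → F} (hf : Integrable f μ) :
    ∫ x, f x ∂μ = ∫ r in Ioi (0 : ℝ), r ^ (finrank ℝ E - 1) •
      ∫ ω : sphere (0 : E) 1, f (r • ω) ∂μ.toSphere := by
  have hpolar := measurePreserving_smul_sphere μ
  rw [← integral_volumeIoiPow _ fun r ↦ ∫ ω : sphere (0 : E) 1, f (r • ω) ∂μ.toSphere,
    ← integral_prod_symm (fun p : sphere (0 : E) 1 × Ioi (0 : ℝ) ↦ f ((p.2 : ℝ) • (p.1 : E)))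
      (hpolar.integrable_comp_of_integrable hf)]
  conv_lhs => rw [← hpolar.map_eq]
  refine integral_map hpolar.aemeasurable ?_
  rw [hpolar.map_eq]
  exact hf.aestronglyMeasurable

end PolarCoordinates

lemma polarCoord_target_inter_preimage_upperHalfPlane :
    polarCoord.target ∩ polarCoord.symm ⁻¹' (univ ×ˢ Ioi (0 : ℝ)) = Ioi (0 : ℝ) ×ˢ Ioo 0 π := by
  ext ⟨r, θ⟩
  simp only [polarCoord_target, polarCoord_symm_apply, mem_inter_iff, mem_prod, mem_preimage,
    mem_univ, true_and, mem_Ioi, mem_Ioo]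
  constructor
  · rintro ⟨⟨hr, hθ⟩, hsin⟩
    refine ⟨hr, ?_, hθ.2⟩
    by_contra! hθ'
    exact hsin.not_ge (mul_nonpos_of_nonneg_of_nonpos hr.le
      (sin_nonpos_of_nonpos_of_neg_pi_le hθ' hθ.1.le))
  · rintro ⟨hr, hθ⟩
    exact ⟨⟨hr, by linarith [pi_pos], hθ.2⟩, mul_pos hr (sin_pos_of_mem_Ioo hθ)⟩

lemma lintegral_upperHalfPlane_eq_polarCoord {G : ℝ × ℝ → ℝ≥0∞} (hG : Measurable G) :
    ∫⁻ x, ∫⁻ y in Ioi (0 : ℝ), G (x, y) =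
      ∫⁻ r in Ioi (0 : ℝ), ∫⁻ θ in Ioo 0 π, ENNReal.ofReal r * G (r * cos θ, r * sin θ) := by
  have hS : MeasurableSet (univ ×ˢ Ioi (0 : ℝ) : Set (ℝ × ℝ)) := .prod .univ measurableSet_Ioi
  calc ∫⁻ x, ∫⁻ y in Ioi (0 : ℝ), G (x, y)
      = ∫⁻ p, (univ ×ˢ Ioi (0 : ℝ)).indicator G p := by
        rw [lintegral_indicator hS, Measure.volume_eq_prod, setLIntegral_prod _ (by fun_prop),
          setLIntegral_univ]
    _ = ∫⁻ p in polarCoord.target, (polarCoord.symm ⁻¹' (univ ×ˢ Ioi (0 : ℝ))).indicator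
          (fun p ↦ ENNReal.ofReal p.1 * G (polarCoord.symm p)) p := by
        rw [← lintegral_comp_polarCoord_symm]
        congr! 2 with p
        simp only [indicator, mem_preimage, smul_eq_mul, mul_ite, mul_zero]
    _ = ∫⁻ r in Ioi (0 : ℝ), ∫⁻ θ in Ioo 0 π,
          ENNReal.ofReal r * G (r * cos θ, r * sin θ) := by
        rw [setLIntegral_indicator (continuous_polarCoord_symm.measurable hS), inter_comm,
          polarCoord_target_inter_preimage_upperHalfPlane, Measure.volume_eq_prod,
          setLIntegral_prod]
        · simp only [polarCoord_symm_apply]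
        · exact ((measurable_fst.ennreal_ofReal).mul
            (hG.comp continuous_polarCoord_symm.measurable)).aemeasurable

section Zonal

variable {E : Type*} [NormedAddCommGroup E] [InnerProductSpace ℝ E] {e : E}

lemma norm_smul_add_orthogonal (he : ‖e‖ = 1) (s : ℝ) (w : (ℝ ∙ e)ᗮ) :
    ‖s • e + (w : E)‖ = √(s ^ 2 + ‖w‖ ^ 2) := by
  have hw : ⟪s • e, (w : E)⟫_ℝ = 0 := by
    rw [inner_smul_left, Submodule.mem_orthogonal_singleton_iff_inner_right.1 w.2, mul_zero]
  rw [← sqrt_sq (norm_nonneg (s • e + (w : E))), sq, norm_add_sq_eq_norm_sq_add_norm_sq_real hw,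
    norm_smul, he]
  simp [← sq]

lemma inner_smul_add_orthogonal (he : ‖e‖ = 1) (s : ℝ) (w : (ℝ ∙ e)ᗮ) :
    ⟪e, s • e + (w : E)⟫_ℝ = s := by
  rw [inner_add_right, inner_smul_right, real_inner_self_eq_norm_sq, he,
    Submodule.mem_orthogonal_singleton_iff_inner_right.1 w.2]
  simp

lemma finrank_orthogonal_span_singleton_of_norm_eq_one {n : ℕ} (hE : finrank ℝ E = n + 1)
    (he : ‖e‖ = 1) : finrank ℝ (ℝ ∙ e)ᗮ = n :=
  haveI : Fact (finrank ℝ E = n + 1) := ⟨hE⟩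
  Submodule.finrank_orthogonal_span_singleton (norm_ne_zero_iff.1 (he ▸ one_ne_zero))

variable [FiniteDimensional ℝ E] [MeasurableSpace E] [BorelSpace E]

lemma measurePreserving_smul_add_orthogonal (he : ‖e‖ = 1) :
    MeasurePreserving (fun p : ℝ × (ℝ ∙ e)ᗮ ↦ p.1 • e + (p.2 : E)) := by
  have hline := (LinearIsometryEquiv.toSpanUnitSingleton (𝕜 := ℝ) e he).measurePreserving
  have hsum := ((ℝ ∙ e).orthogonalDecomposition.symm.measurePreserving).comp
    (WithLp.volume_preserving_toLp (ℝ ∙ e) (ℝ ∙ e)ᗮ)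
  convert! hsum.comp (hline.prod (.id volume)) using 1

lemma lintegral_norm_inner_eq_cylindrical {n : ℕ} (hE : finrank ℝ E = n + 2) (he : ‖e‖ = 1)
    {G : ℝ × ℝ → ℝ≥0∞} (hG : Measurable G) :
    ∫⁻ x : E, G (‖x‖, ⟪e, x⟫_ℝ) = (volume : Measure (ℝ ∙ e)ᗮ).toSphere univ *
      ∫⁻ s, ∫⁻ ρ in Ioi (0 : ℝ), ENNReal.ofReal (ρ ^ n) * G (√(s ^ 2 + ρ ^ 2), s) := by
  have hdim : finrank ℝ (ℝ ∙ e)ᗮ = n + 1 :=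
    finrank_orthogonal_span_singleton_of_norm_eq_one hE he
  have : Nontrivial (ℝ ∙ e)ᗮ := nontrivial_of_finrank_pos (R := ℝ) (by omega)
  have hslice (s : ℝ) : ∫⁻ w : (ℝ ∙ e)ᗮ, G (√(s ^ 2 + ‖w‖ ^ 2), s) =
      (volume : Measure (ℝ ∙ e)ᗮ).toSphere univ *
        ∫⁻ ρ in Ioi (0 : ℝ), ENNReal.ofReal (ρ ^ n) * G (√(s ^ 2 + ρ ^ 2), s) := by
    rw [lintegral_eq_lintegral_Ioi_toSphere _ (by fun_prop), ← lintegral_const_mul _ (by fun_prop)]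
    refine setLIntegral_congr_fun measurableSet_Ioi fun ρ (hρ : 0 < ρ) ↦ ?_
    simp only [norm_smul, norm_eq_of_mem_sphere, mul_one, norm_of_nonneg hρ.le, lintegral_const,
      hdim, Nat.add_sub_cancel]
    ring
  rw [← (measurePreserving_smul_add_orthogonal he).lintegral_comp (by fun_prop)]
  simp only [norm_smul_add_orthogonal he, inner_smul_add_orthogonal he]
  rw [Measure.volume_eq_prod, lintegral_prod _ (by fun_prop)]
  simp only [hslice]
  exact lintegral_const_mul _ (Measurable.lintegral_prod_right' (f := fun p : ℝ × ℝ ↦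
    ENNReal.ofReal (p.2 ^ n) * G (√(p.1 ^ 2 + p.2 ^ 2), p.1)) (by fun_prop))

lemma lintegral_norm_inner_eq_polar {n : ℕ} (hE : finrank ℝ E = n + 2) (he : ‖e‖ = 1)
    {G : ℝ × ℝ → ℝ≥0∞} (hG : Measurable G) :
    ∫⁻ x : E, G (‖x‖, ⟪e, x⟫_ℝ) =
      (volume : Measure (ℝ ∙ e)ᗮ).toSphere univ *
        ∫⁻ r in Ioi (0 : ℝ), ENNReal.ofReal (r ^ (n + 1)) *
          ∫⁻ θ in Ioo 0 π, ENNReal.ofReal (sin θ ^ n) * G (r, r * cos θ) := by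
  rw [lintegral_norm_inner_eq_cylindrical hE he hG,
    lintegral_upperHalfPlane_eq_polarCoord (G := fun p : ℝ × ℝ ↦
      ENNReal.ofReal (p.2 ^ n) * G (√(p.1 ^ 2 + p.2 ^ 2), p.1)) (by fun_prop)]
  congr 1
  refine setLIntegral_congr_fun measurableSet_Ioi fun r (hr : 0 < r) ↦ ?_
  have hnorm (θ : ℝ) : √((r * cos θ) ^ 2 + (r * sin θ) ^ 2) = r := by
    rw [mul_pow, mul_pow, ← mul_add, cos_sq_add_sin_sq, mul_one, sqrt_sq hr.le]
  simp only [hnorm, mul_pow _ _ n, ENNReal.ofReal_mul (pow_nonneg hr.le n)]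
  rw [← lintegral_const_mul _ (by fun_prop)]
  congr! 2 with θ
  rw [pow_succ, ENNReal.ofReal_mul (by positivity)]
  ring

lemma lintegral_toSphere_inner {n : ℕ} (hE : finrank ℝ E = n + 2) (he : ‖e‖ = 1)
    {h : ℝ → ℝ≥0∞} (hh : Measurable h) :
    ∫⁻ ω : sphere (0 : E) 1, h ⟪e, ω⟫_ℝ ∂(volume : Measure E).toSphere =
      (volume : Measure (ℝ ∙ e)ᗮ).toSphere univ *
        ∫⁻ θ in Ioo 0 π, ENNReal.ofReal (sin θ ^ n) * h (cos θ) := by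
  have : Nontrivial E := nontrivial_of_finrank_pos (R := ℝ) (by omega)
  -- Both sides are read off from the integral of `x ↦ h (⟪e, x⟫ / ‖x‖)` over the unit ball.
  let χ : ℝ → ℝ≥0∞ := (Iio 1).indicator 1
  let c : ℝ≥0∞ := ∫⁻ r in Ioi (0 : ℝ), ENNReal.ofReal (r ^ (n + 1)) * χ r
  have hχ : Measurable χ := measurable_one.indicator measurableSet_Iio
  have hc : c = Measure.volumeIoiPow (n + 1) (Iio ⟨1, mem_Ioi.2 one_pos⟩) := by
    rw [← lintegral_indicator_one measurableSet_Iio]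
    exact (lintegral_volumeIoiPow (n + 1) χ).symm
  rw [Measure.volumeIoiPow_apply_Iio] at hc
  have hsphere : ∫⁻ x : E, χ ‖x‖ * h (⟪e, x⟫_ℝ / ‖x‖) =
      c * ∫⁻ ω : sphere (0 : E) 1, h ⟪e, ω⟫_ℝ ∂(volume : Measure E).toSphere := by
    rw [lintegral_eq_lintegral_Ioi_toSphere _ (by fun_prop), hE,
      ← lintegral_mul_const _ (by fun_prop)]
    refine setLIntegral_congr_fun measurableSet_Ioi fun r (hr : 0 < r) ↦ ?_
    simp only [norm_smul, norm_eq_of_mem_sphere, mul_one, norm_of_nonneg hr.le, inner_smul_right,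
      mul_div_cancel_left₀ _ hr.ne']
    rw [lintegral_const_mul _ (by fun_prop), mul_assoc]
    rfl
  have hangle : ∫⁻ x : E, χ ‖x‖ * h (⟪e, x⟫_ℝ / ‖x‖) =
      c * ((volume : Measure (ℝ ∙ e)ᗮ).toSphere univ *
        ∫⁻ θ in Ioo 0 π, ENNReal.ofReal (sin θ ^ n) * h (cos θ)) := by
    rw [lintegral_norm_inner_eq_polar hE he (G := fun p ↦ χ p.1 * h (p.2 / p.1)) (by fun_prop),
      mul_left_comm, ← lintegral_mul_const _ (by fun_prop)]
    congr 1
    refine setLIntegral_congr_fun measurableSet_Ioi fun r (hr : 0 < r) ↦ ?_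
    simp only [mul_div_cancel_left₀ _ hr.ne', mul_left_comm _ (χ r)]
    rw [lintegral_const_mul _ (by fun_prop), mul_assoc]
  refine (ENNReal.mul_right_inj ?_ ?_).1 (hsphere.symm.trans hangle)
  · rw [hc, ENNReal.ofReal_ne_zero_iff]; positivity
  · exact hc ▸ ENNReal.ofReal_ne_top

lemma map_inner_toSphere {n : ℕ} (hE : finrank ℝ E = n + 2) (he : ‖e‖ = 1) :
    (volume : Measure E).toSphere.map (fun ω : sphere (0 : E) 1 ↦ ⟪e, (ω : E)⟫_ℝ) =
      (volume : Measure (ℝ ∙ e)ᗮ).toSphere univ •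
        ((volume.restrict (Ioo 0 π)).withDensity fun θ ↦ ENNReal.ofReal (sin θ ^ n)).map cos := by
  refine Measure.ext_of_lintegral _ fun h hh ↦ ?_
  rw [lintegral_map hh (by fun_prop), lintegral_toSphere_inner hE he hh, lintegral_smul_measure,
    lintegral_map hh measurable_cos, lintegral_withDensity_eq_lintegral_mul _ (by fun_prop)
      (by fun_prop)]
  rfl

lemma integral_toSphere_inner {F : Type*} [NormedAddCommGroup F] [NormedSpace ℝ F] {n : ℕ}
    (hE : finrank ℝ E = n + 2) (he : ‖e‖ = 1) {h : ℝ → F} (hh : StronglyMeasurable h) :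
    ∫ ω : sphere (0 : E) 1, h ⟪e, ω⟫_ℝ ∂(volume : Measure E).toSphere =
      (volume : Measure (ℝ ∙ e)ᗮ).toSphere.real univ • ∫ θ in 0..π, sin θ ^ n • h (cos θ) := by
  rw [← integral_map (φ := fun ω : sphere (0 : E) 1 ↦ ⟪e, (ω : E)⟫_ℝ)
      (Continuous.aemeasurable (by fun_prop)) hh.aestronglyMeasurable,
    map_inner_toSphere hE he, integral_smul_measure,
    integral_map measurable_cos.aemeasurable hh.aestronglyMeasurable,
    integral_withDensity_eq_integral_toReal_smul (by fun_prop)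
      (.of_forall fun _ ↦ ENNReal.ofReal_lt_top),
    intervalIntegral.integral_of_le pi_pos.le, integral_Ioc_eq_integral_Ioo]
  congr 1
  refine setIntegral_congr_fun measurableSet_Ioo fun θ hθ ↦ ?_
  simp only [ENNReal.toReal_ofReal (pow_nonneg (sin_pos_of_mem_Ioo hθ).le n)]

lemma toSphere_real_univ_of_finrank_eq_two (hE : finrank ℝ E = 2) :
    (volume : Measure E).toSphere.real univ = 2 * π := by
  have : Nontrivial E := nontrivial_of_finrank_pos (R := ℝ) (by omega)
  rw [Measure.toSphere_real_apply_univ, measureReal_def,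
    InnerProductSpace.volume_ball_of_dim_even (k := 1) hE, hE]
  simp [pi_nonneg]

lemma integral_sin_mul_exp_mul_cos {c : ℝ} (hc : c ≠ 0) :
    ∫ θ in 0..π, sin θ * exp (c * cos θ) = 2 * sinh c / c := by
  have hderiv (θ : ℝ) :
      HasDerivAt (fun θ ↦ -(exp (c * cos θ) / c)) (sin θ * exp (c * cos θ)) θ := by
    convert! ((((hasDerivAt_cos θ).const_mul c).exp).div_const c).neg using 1
    field_simp
  rw [intervalIntegral.integral_eq_sub_of_hasDerivAt (fun θ _ ↦ hderiv θ)
    (Continuous.intervalIntegrable (by fun_prop) _ _), cos_pi, cos_zero, sinh_eq]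
  ring_nf

lemma integral_toSphere_exp_inner (hE : finrank ℝ E = 3) {v : E} (hv : v ≠ 0) :
    ∫ ω : sphere (0 : E) 1, exp ⟪v, ω⟫_ℝ ∂(volume : Measure E).toSphere =
      4 * π * sinh ‖v‖ / ‖v‖ := by
  obtain ⟨e, he, hve⟩ : ∃ e : E, ‖e‖ = 1 ∧ v = ‖v‖ • e :=
    ⟨‖v‖⁻¹ • v, by simp [norm_smul, hv], by simp [hv]⟩
  have hinner (ω : E) : ⟪v, ω⟫_ℝ = ‖v‖ * ⟪e, ω⟫_ℝ := by
    conv_lhs => rw [hve, real_inner_smul_left]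
  calc ∫ ω : sphere (0 : E) 1, exp ⟪v, ω⟫_ℝ ∂(volume : Measure E).toSphere
      = ∫ ω : sphere (0 : E) 1, exp (‖v‖ * ⟪e, ω⟫_ℝ) ∂(volume : Measure E).toSphere := by
        simp only [hinner]
    _ = 2 * π * ∫ θ in 0..π, sin θ * exp (‖v‖ * cos θ) := by
        rw [integral_toSphere_inner (n := 1) hE he (h := fun s ↦ exp (‖v‖ * s))
            (Continuous.stronglyMeasurable (by fun_prop)),
          toSphere_real_univ_of_finrank_eq_two
            (finrank_orthogonal_span_singleton_of_norm_eq_one hE he)]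
        simp only [pow_one, smul_eq_mul]
    _ = 4 * π * sinh ‖v‖ / ‖v‖ := by
        rw [integral_sin_mul_exp_mul_cos (norm_ne_zero_iff.2 hv)]
        ring

lemma integral_toSphere_exp_neg_norm_sub_sq (hE : finrank ℝ E = 3) {t r : ℝ} (ht : 0 < t)
    (hr : 0 < r) {x : E} (hx : x ≠ 0) :
    ∫ ω : sphere (0 : E) 1, exp (-‖r • (ω : E) - x‖ ^ 2 / (4 * t)) ∂(volume : Measure E).toSphere =
      8 * π * t / (r * ‖x‖) * sinh (‖x‖ * r / (2 * t)) * exp (-(r ^ 2 + ‖x‖ ^ 2) / (4 * t)) := by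
  have hexp (ω : sphere (0 : E) 1) : exp (-‖r • (ω : E) - x‖ ^ 2 / (4 * t)) =
      exp (-(r ^ 2 + ‖x‖ ^ 2) / (4 * t)) * exp ⟪(r / (2 * t)) • x, (ω : E)⟫_ℝ := by
    rw [← exp_add, norm_sub_sq_real, real_inner_smul_left, real_inner_smul_left, norm_smul,
      norm_eq_of_mem_sphere, norm_of_nonneg hr.le, real_inner_comm]
    congr 1
    field_simp
    ring
  have hnorm : ‖(r / (2 * t)) • x‖ = ‖x‖ * r / (2 * t) := by
    rw [norm_smul, norm_of_nonneg (by positivity)]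
    ring
  simp only [hexp]
  rw [integral_const_mul, integral_toSphere_exp_inner hE (smul_ne_zero (by positivity) hx), hnorm]
  field_simp
  ring

end Zonal

lemma four_mul_pi_mul_rpow_three_halves {t : ℝ} (ht : 0 ≤ t) :
    (4 * π * t) ^ ((3 : ℝ) / 2) = 8 * π * t * √(π * t) := by
  rw [show (3 : ℝ) / 2 = 1 + 1 / 2 by norm_num, rpow_add_of_nonneg (by positivity) zero_le_one
      (by norm_num), rpow_one, ← sqrt_eq_rpow, show 4 * π * t = 2 ^ 2 * (π * t) by ring,
    sqrt_mul (by positivity), sqrt_sq zero_le_two]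
  ring

lemma hasCompactSupport_comp_norm {E F : Type*} [NormedAddCommGroup E] [ProperSpace E] [Zero F]
    {f : ℝ → F} (hf : HasCompactSupport f) : HasCompactSupport fun x : E ↦ f ‖x‖ := by
  rw [hasCompactSupport_iff_eventuallyEq, coclosedCompact_eq_cocompact] at hf ⊢
  exact tendsto_norm_cocompact_atTop.eventually (atTop_le_cocompact hf)

lemma integrable_smul_comp_norm {E F : Type*} [NormedAddCommGroup E] [ProperSpace E]
    [MeasurableSpace E] [OpensMeasurableSpace E] {μ : Measure E} [IsFiniteMeasureOnCompacts μ]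
    [NormedAddCommGroup F] [NormedSpace ℝ F] {g : E → ℝ} (hg : Continuous g) {f : ℝ → F}
    (hf : Continuous f) (hf' : HasCompactSupport f) : Integrable (fun x : E ↦ g x • f ‖x‖) μ :=
  Continuous.integrable_of_hasCompactSupport (by fun_prop)
    (hasCompactSupport_comp_norm hf').smul_left

theorem stmt_6_general {E F : Type*} [NormedAddCommGroup E] [InnerProductSpace ℝ E]
    [FiniteDimensional ℝ E] [MeasurableSpace E] [BorelSpace E] [NormedAddCommGroup F]
    [NormedSpace ℝ F] [CompleteSpace F] (hE : finrank ℝ E = 3) {f : ℝ → F} {t : ℝ} (ht : 0 < t)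
    {x : E} (hx : x ≠ 0)
    (hf : Integrable fun y : E ↦ exp (-‖y - x‖ ^ 2 / (4 * t)) • f ‖y‖) :
    (1 / (4 * π * t) ^ ((3 : ℝ) / 2)) • ∫ y : E, exp (-‖y - x‖ ^ 2 / (4 * t)) • f ‖y‖ =
      (1 / √(π * t)) • ∫ r in Ioi (0 : ℝ),
        ((r / ‖x‖) * sinh (‖x‖ * r / (2 * t)) * exp (-(r ^ 2 + ‖x‖ ^ 2) / (4 * t))) • f r := by
  have : Nontrivial E := nontrivial_of_ne x 0 hx
  have hsphere {r : ℝ} (hr : 0 < r) :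
      ∫ ω : sphere (0 : E) 1, exp (-‖r • (ω : E) - x‖ ^ 2 / (4 * t)) • f ‖r • (ω : E)‖
        ∂(volume : Measure E).toSphere =
      (8 * π * t / (r * ‖x‖) * sinh (‖x‖ * r / (2 * t)) *
        exp (-(r ^ 2 + ‖x‖ ^ 2) / (4 * t))) • f r := by
    simp only [norm_smul r, norm_eq_of_mem_sphere, norm_of_nonneg hr.le, mul_one]
    rw [integral_smul_const, integral_toSphere_exp_neg_norm_sub_sq hE ht hr hx]
  rw [integral_eq_integral_Ioi_toSphere _ hf, hE, four_mul_pi_mul_rpow_three_halves ht.le,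
    ← integral_smul, ← integral_smul]
  refine setIntegral_congr_fun measurableSet_Ioi fun r (hr : 0 < r) ↦ ?_
  simp only [hsphere hr, smul_smul]
  congr 1
  field_simp

/-- the action of the Euclidean heat semigroup of `ℝ³` on radial functions. -/
theorem stmt_6 (f : ℝ → ℝ) (hf : Continuous f) (hf' : HasCompactSupport f)
    (t : ℝ) (ht : 0 < t) (x : EuclideanSpace ℝ (Fin 3)) (hx : x ≠ 0) :
    (1 / (4 * π * t) ^ ((3 : ℝ) / 2)) *
        ∫ y : EuclideanSpace ℝ (Fin 3), Real.exp (-‖y - x‖ ^ 2 / (4 * t)) * f ‖y‖ =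
      (1 / Real.sqrt (π * t)) *
        ∫ r in Set.Ioi (0 : ℝ),
          (r / ‖x‖) * Real.sinh (‖x‖ * r / (2 * t)) *
            Real.exp (-(r ^ 2 + ‖x‖ ^ 2) / (4 * t)) * f r := by
  exact stmt_6_general finrank_euclideanSpace_fin ht hx
    (integrable_smul_comp_norm (by fun_prop) hf hf')

end
end
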